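/- arXiv:1907.03024 — 3 statements merged into one kernel-verified Lean document; each statement's English description precedes it below -/
import Mathlib

section
/- Fix an integer n ≥ 2. Let f, h ∈ Homeo₊(ℝ), and suppose f has compact support. If there exists a group isomorphism φ from the subgroup of Homeo₊(ℝ) generated by BS(1,n) ∪ {f} to the subgroup generated by BS(1,n) ∪ {h} such that φ(γ) = γ for every γ ∈ BS(1,n) and φ(f) = h, then h = f. -/
open Set Topology

/-- The group of self-homeomorphisms of `X`, with `(f * g) x = f (g x)`. -/
instance {X : Type*} [TopologicalSpace X] : Group (X ≃ₜ X) where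
  mul f g := g.trans f
  one := Homeomorph.refl X
  inv := Homeomorph.symm
  mul_assoc _ _ _ := Homeomorph.ext fun _ => rfl
  one_mul _ := Homeomorph.ext fun _ => rfl
  mul_one _ := Homeomorph.ext fun _ => rfl
  inv_mul_cancel f := Homeomorph.ext fun x => f.symm_apply_apply x

/-- The support of a homeomorphism: the closure of the set of non-fixed points. -/
def Supp (f : ℝ ≃ₜ ℝ) : Set ℝ := closure {x | f x ≠ x}

/-- The homeomorphism `x ↦ n·x` of `ℝ`. -/
noncomputable def dilation (n : ℕ) (hn : 2 ≤ n) : ℝ ≃ₜ ℝ :=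
  Homeomorph.mulLeft₀ (n : ℝ) (by positivity)

/-- The homeomorphism `x ↦ x + t` of `ℝ`. -/
noncomputable def translation (t : ℝ) : ℝ ≃ₜ ℝ := Homeomorph.addRight t

/-- The standard affine Baumslag–Solitar group `BS(1,n)`, generated by `x ↦ n·x`
and `x ↦ x + 1`, as a subgroup of the homeomorphism group of `ℝ`. -/
noncomputable def BSgroup (n : ℕ) (hn : 2 ≤ n) : Subgroup (ℝ ≃ₜ ℝ) :=
  Subgroup.closure {dilation n hn, translation 1}

/-!
Suppose that `Γ` contains a dense set of translations and arbitrarily small homotheties, as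
`BS(1,n)` does. Only the commutation relations between conjugates of `f` are used: they are the same
for `h`.

* Since `f` has compact support it commutes with its translates by large `r` and with shrunken
  copies of these, but not with all its translates; by density of the translations in `Γ`, the same
  holds for `h`.
* If `h` had no fixed point, it and a translate of it would commute with tiny copies of `h` far
  away, without fixed points as well, and Hölder's argument would make them commute with each other.
* If `h` commutes with its translate by `y - x`, then `x` is moved by `h` if and only if
  `x + (h y - y)` is. Letting `y` vary far from a frontier point `x` of the set of moved points,
  where that frontier is totally disconnected, forces `h y = y`. So `h` also has compact support.
* Conjugating by `Γ` now puts the supports of `f` and `h` into any given open set, and such small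
  conjugates tell `f` and `h` apart at any point where they differ.
-/

namespace BSRecognition

section Commutation

variable {G : Type*} [Group G]

/-- `f` and `h` satisfy the same commutation relations of the form
`[f γ f γ⁻¹ f⁻¹, γ' f γ'⁻¹] = 1` with `γ, γ' ∈ Γ`. This is all that the argument retains of an
isomorphism fixing `Γ` and sending `f` to `h`. -/
def SameCommutingConjugates (Γ : Subgroup G) (f h : G) : Prop :=
  ∀ γ ∈ Γ, ∀ γ' ∈ Γ, Commute (MulAut.conj (f * γ) f) (MulAut.conj γ' f) ↔
    Commute (MulAut.conj (h * γ) h) (MulAut.conj γ' h)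

theorem SameCommutingConjugates.commute_conj_iff {Γ : Subgroup G} {f h : G}
    (hfh : SameCommutingConjugates Γ f h) {γ : G} (hγ : γ ∈ Γ) :
    Commute f (MulAut.conj γ f) ↔ Commute h (MulAut.conj γ h) := by
  simpa only [mul_one, MulAut.conj_apply, mul_inv_cancel_right] using hfh 1 Γ.one_mem γ hγ

theorem sameCommutingConjugates_of_injective {Γ : Subgroup G} {f : G}
    (φ : Subgroup.closure ((Γ : Set G) ∪ {f}) →* G) (hφ : Function.Injective φ)
    (hφΓ : ∀ (γ : G) (hγ : γ ∈ Γ), φ ⟨γ, Subgroup.subset_closure (mem_union_left _ hγ)⟩ = γ) :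
    SameCommutingConjugates Γ f
      (φ ⟨f, Subgroup.subset_closure (mem_union_right _ (mem_singleton f))⟩) := by
  intro γ hγ γ' hγ'
  set F : Subgroup.closure ((Γ : Set G) ∪ {f}) :=
    ⟨f, Subgroup.subset_closure (mem_union_right _ (mem_singleton f))⟩
  let lift (α : G) (hα : α ∈ Γ) : Subgroup.closure ((Γ : Set G) ∪ {f}) :=
    ⟨α, Subgroup.subset_closure (mem_union_left _ hα)⟩
  let P := MulAut.conj (F * lift γ hγ) F
  let Q := MulAut.conj (lift γ' hγ') F
  have map_conj (α β : Subgroup.closure ((Γ : Set G) ∪ {f})) :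
      φ (MulAut.conj α β) = MulAut.conj (φ α) (φ β) := by
    simp only [MulAut.conj_apply, map_mul, map_inv]
  have hP : φ P = MulAut.conj (φ F * γ) (φ F) :=
    (map_conj _ _).trans (by rw [map_mul φ, hφΓ γ hγ])
  have hQ : φ Q = MulAut.conj γ' (φ F) := (map_conj _ _).trans (by rw [hφΓ γ' hγ'])
  have hPQ : Commute P Q ↔ Commute (φ P) (φ Q) := ⟨fun h => h.map φ, fun h => h.of_map hφ⟩
  rw [← hP, ← hQ, ← hPQ]
  exact ⟨fun h => h.of_map Subtype.val_injective (f := Subgroup.subtype _),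
    fun h => h.map (Subgroup.subtype _)⟩

end Commutation

section Moved

variable {X : Type*} [TopologicalSpace X] {f g h : X ≃ₜ X}

/-- The set of points that a homeomorphism moves, before taking the closure as in `Supp`. -/
def moved (g : X ≃ₜ X) : Set X := {x | g x ≠ x}

theorem commute_iff_function_commute : Commute f g ↔ Function.Commute f g :=
  Homeomorph.ext_iff

theorem isOpen_moved [T2Space X] (g : X ≃ₜ X) : IsOpen (moved g) :=
  isOpen_ne_fun g.continuous continuous_id

theorem moved_nonempty_iff : (moved g).Nonempty ↔ g ≠ 1 := by
  rw [Ne, Homeomorph.ext_iff, not_forall]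
  rfl

theorem moved_conj (γ g : X ≃ₜ X) : moved (MulAut.conj γ g) = γ '' moved g := by
  ext x
  rw [γ.image_eq_preimage_symm]
  exact not_congr γ.toEquiv.eq_symm_apply.symm

theorem image_moved_of_commute (hfg : Commute f g) : f '' moved g = moved g := by
  rw [← moved_conj, MulAut.conj_apply, hfg.eq, mul_inv_cancel_right]

theorem apply_mem_moved_iff (hfg : Commute f g) {x : X} : f x ∈ moved g ↔ x ∈ moved g := by
  conv_lhs => rw [← image_moved_of_commute hfg]
  exact f.injective.mem_set_image

theorem apply_mem_frontier_moved_iff (hfg : Commute f g) {x : X} :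
    f x ∈ frontier (moved g) ↔ x ∈ frontier (moved g) := by
  conv_lhs => rw [← image_moved_of_commute hfg, ← f.image_frontier]
  exact f.injective.mem_set_image

theorem commute_of_disjoint_moved (hfg : Disjoint (moved f) (moved g)) : Commute f g := by
  have hperm : Equiv.Perm.Disjoint f.toEquiv g.toEquiv := fun x =>
    or_iff_not_imp_left.2 fun hf => not_not.1 (disjoint_left.1 hfg hf)
  exact commute_iff_function_commute.2 (Equiv.ext_iff.1 hperm.commute)

-- If `y ∈ W` is moved by `g`, choose `γ` so small that `g` moves `moved (γ h γ⁻¹)`, which lies near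
-- `y`, off itself.
theorem exists_not_commute_conj [T2Space X] {Γ : Subgroup (X ≃ₜ X)} {B W : Set X}
    (hΓ : ∀ V : Set X, IsOpen V → V.Nonempty → ∃ γ ∈ Γ, γ '' B ⊆ V)
    (hh : moved h ⊆ B) (hh₁ : h ≠ 1) (hW : IsOpen W) (hgW : (W ∩ moved g).Nonempty) :
    ∃ γ ∈ Γ, γ '' B ⊆ W ∧ ¬ Commute g (MulAut.conj γ h) := by
  obtain ⟨y, hyW, hy⟩ := hgW
  obtain ⟨N, N', hN, hN', hyN, hyN', hNN'⟩ := t2_separation (Ne.symm hy)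
  obtain ⟨γ, hγ, hγB⟩ := hΓ (W ∩ (N ∩ g ⁻¹' N'))
    (hW.inter (hN.inter (hN'.preimage g.continuous))) ⟨y, hyW, hyN, hyN'⟩
  refine ⟨γ, hγ, hγB.trans inter_subset_left, fun hcomm => ?_⟩
  have hsub : moved (MulAut.conj γ h) ⊆ N ∩ g ⁻¹' N' := by
    rw [moved_conj]
    exact (image_mono hh).trans (hγB.trans inter_subset_right)
  obtain ⟨z, hz⟩ := moved_conj γ h ▸ (moved_nonempty_iff.2 hh₁).image γ
  exact disjoint_left.1 hNN' (hsub ((apply_mem_moved_iff hcomm).2 hz)).1 (hsub hz).2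

-- If `f x₀ ≠ h x₀` and `γ` shrinks `B` to a small neighbourhood of `x₀`, then `f γ f γ⁻¹ f⁻¹` and
-- `h γ h γ⁻¹ h⁻¹` move disjoint sets of points, near `f x₀` and `h x₀` respectively. Hence some
-- `γ' f γ'⁻¹` that only moves points near `h x₀` commutes with the former, while `γ' h γ'⁻¹` does
-- not commute with the latter.
theorem eq_of_sameCommutingConjugates [T2Space X] {Γ : Subgroup (X ≃ₜ X)} {B : Set X}
    (hΓ : ∀ V : Set X, IsOpen V → V.Nonempty → ∃ γ ∈ Γ, γ '' B ⊆ V)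
    (hf : moved f ⊆ B) (hh : moved h ⊆ B) (hh₁ : h ≠ 1) (hfh : SameCommutingConjugates Γ f h) :
    h = f := by
  by_contra hne
  obtain ⟨x₀, hx₀⟩ : ∃ x, f x ≠ h x := by
    by_contra! heq
    exact hne (Homeomorph.ext fun x => (heq x).symm)
  obtain ⟨Wf, Wh, hWf, hWh, hfx₀, hhx₀, hW⟩ := t2_separation hx₀
  obtain ⟨γ, hγ, hγB⟩ := hΓ (f ⁻¹' Wf ∩ h ⁻¹' Wh)
    ((hWf.preimage f.continuous).inter (hWh.preimage h.continuous)) ⟨x₀, hfx₀, hhx₀⟩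
  have hmoved_f : moved (MulAut.conj (f * γ) f) ⊆ Wf := by
    rw [moved_conj]
    rintro _ ⟨x, hx, rfl⟩
    exact (hγB (mem_image_of_mem γ (hf hx))).1
  have hmoved_h : moved (MulAut.conj (h * γ) h) ⊆ Wh := by
    rw [moved_conj]
    rintro _ ⟨x, hx, rfl⟩
    exact (hγB (mem_image_of_mem γ (hh hx))).2
  obtain ⟨y, hy⟩ := moved_conj (h * γ) h ▸ (moved_nonempty_iff.2 hh₁).image (h * γ)
  obtain ⟨γ', hγ', hγB', hncomm⟩ :=
    exists_not_commute_conj hΓ hh hh₁ hWh ⟨y, hmoved_h hy, hy⟩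
  refine hncomm ((hfh γ hγ γ' hγ').1 (commute_of_disjoint_moved ?_))
  rw [moved_conj γ']
  exact hW.mono hmoved_f ((image_mono hf).trans hγB')

end Moved

section Iterate

variable {α : Type*} [ConditionallyCompleteLinearOrder α] [TopologicalSpace α] [OrderTopology α]
  {a b g : α → α}

theorem exists_lt_iterate (hg : Continuous g) (hlt : ∀ x, x < g x) (x y : α) :
    ∃ m : ℕ, y < g^[m] x := by
  by_contra! hle
  have hmono : Monotone fun m : ℕ => g^[m] x := monotone_nat_of_le_succ fun m => by
    rw [Function.iterate_succ_apply']
    exact (hlt _).le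
  have htendsto := tendsto_atTop_ciSup hmono ⟨y, forall_mem_range.2 hle⟩
  exact (hlt _).ne' (isFixedPt_of_tendsto_iterate htendsto hg.continuousAt)

theorem exists_iterate_le_lt (hg : Continuous g) (hlt : ∀ x, x < g x) {x y : α} (hxy : x ≤ y) :
    ∃ m : ℕ, g^[m] x ≤ y ∧ y < g^[m + 1] x := by
  have hex := exists_lt_iterate hg hlt x y
  obtain ⟨m, hm⟩ : ∃ m, Nat.find hex = m + 1 :=
    Nat.exists_eq_succ_of_ne_zero fun h0 => (Nat.find_eq_zero hex).1 h0 |>.not_ge hxy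
  exact ⟨m, not_lt.1 (Nat.find_min hex (by omega)), hm ▸ Nat.find_spec hex⟩

-- Hölder's argument: on the `g`-orbit scale, `a` and `b` are translations up to an error of one.
theorem apply_apply_lt_of_commute (ha : StrictMono a) (hb : Monotone b) (hg : Continuous g)
    (hgmono : StrictMono g) (hlt : ∀ x, x < g x) (hag : Function.Commute a g)
    (hbg : Function.Commute b g) {x : α} (hax : x ≤ a x) (hbx : x ≤ b x) :
    a (b x) < g (g (b (a x))) := by
  obtain ⟨i, hi, hi'⟩ := exists_iterate_le_lt hg hlt hax
  obtain ⟨j, hj, hj'⟩ := exists_iterate_le_lt hg hlt hbx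
  calc a (b x) < a (g^[j + 1] x) := ha hj'
    _ = g^[j + 1] (a x) := hag.iterate_right _ x
    _ < g^[j + 1] (g^[i + 1] x) := hgmono.iterate _ hi'
    _ = g (g (g^[i] (g^[j] x))) := by
      rw [← Function.iterate_add_apply, ← Function.iterate_add_apply,
        ← Function.iterate_succ_apply' g, ← Function.iterate_succ_apply' g]
      congr 1
      omega
    _ ≤ g (g (g^[i] (b x))) := (hgmono.comp hgmono).monotone.comp (hgmono.monotone.iterate i) hj
    _ = g (g (b (g^[i] x))) := by rw [hbg.iterate_right i x]
    _ ≤ g (g (b (a x))) := (hgmono.comp hgmono).monotone (hb hi)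

theorem commute_of_small_displacement [NoMaxOrder α] (ha : StrictMono a) (hb : StrictMono b)
    (halt : ∀ x, x < a x) (hblt : ∀ x, x < b x) {R : α}
    (hsmall : ∀ s > R, ∀ u > s, ∃ g : α → α, Continuous g ∧ StrictMono g ∧ (∀ x, x < g x) ∧
      Function.Commute a g ∧ Function.Commute b g ∧ g (g s) ≤ u) :
    Function.Commute a b := by
  have hfar (x : α) (hx : R < x) : a (b x) = b (a x) := by
    apply le_antisymm <;> by_contra! hlt
    · obtain ⟨g, hg, hgmono, hglt, hag, hbg, hle⟩ :=
        hsmall _ (hx.trans ((halt x).trans (hblt _))) _ hlt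
      exact hle.not_gt (apply_apply_lt_of_commute ha hb.monotone hg hgmono hglt hag hbg
        (halt x).le (hblt x).le)
    · obtain ⟨g, hg, hgmono, hglt, hag, hbg, hle⟩ :=
        hsmall _ (hx.trans ((hblt x).trans (halt _))) _ hlt
      exact hle.not_gt (apply_apply_lt_of_commute hb ha.monotone hg hgmono hglt hbg hag
        (hblt x).le (halt x).le)
  intro x
  obtain ⟨s, hs⟩ := exists_gt R
  obtain ⟨g, hg, hgmono, hglt, hag, hbg, -⟩ := hsmall s hs _ (halt s)
  obtain ⟨m, hm⟩ := exists_lt_iterate hg hglt x R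
  have hag' := hag.iterate_right m
  have hbg' := hbg.iterate_right m
  apply (hgmono.iterate m).injective
  rw [← hag', ← hbg', hfar _ hm, hag' x, hbg' (a x)]

end Iterate

section Translate

variable {f g h : ℝ ≃ₜ ℝ}

/-- Conjugation by `x ↦ x + r`, which moves the graph of a homeomorphism along the diagonal. -/
noncomputable def translate (r : ℝ) : MulAut (ℝ ≃ₜ ℝ) := MulAut.conj (translation r)

theorem translate_apply (r : ℝ) (g : ℝ ≃ₜ ℝ) (x : ℝ) : translate r g x = g (x - r) + r :=
  rfl

theorem translate_translate (r s : ℝ) (g : ℝ ≃ₜ ℝ) :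
    translate r (translate s g) = translate (r + s) g := by
  ext x
  simp only [translate_apply]
  ring_nf

theorem conj_translation_mul (r : ℝ) (δ g : ℝ ≃ₜ ℝ) :
    MulAut.conj (translation r * δ) g = translate r (MulAut.conj δ g) := by
  rw [map_mul]
  rfl

theorem moved_translate (r : ℝ) (g : ℝ ≃ₜ ℝ) :
    moved (translate r g) = Homeomorph.subRight r ⁻¹' moved g :=
  (moved_conj _ g).trans ((translation r).image_eq_preimage_symm _)

theorem frontier_moved_translate (r : ℝ) (g : ℝ ≃ₜ ℝ) :
    frontier (moved (translate r g)) = Homeomorph.subRight r ⁻¹' frontier (moved g) := by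
  rw [moved_translate, Homeomorph.preimage_frontier]

theorem commute_translate_of_dense {T U : Set ℝ} (hT : Dense T) (hU : IsOpen U)
    (hTU : ∀ r ∈ T, r ∈ U → Commute f (translate r g)) {r : ℝ} (hr : r ∈ U) :
    Commute f (translate r g) := by
  refine commute_iff_function_commute.2 fun x => ?_
  by_contra hne
  have hopen : IsOpen {s | f (translate s g x) ≠ translate s g (f x)} := by
    have hf := f.continuous
    have hg := g.continuous
    simp only [translate_apply]
    exact isOpen_ne_fun (by fun_prop) (by fun_prop)
  obtain ⟨s, hsT, hsU, hs⟩ := hT.exists_mem_open (hU.inter hopen) ⟨r, hr, hne⟩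
  exact hs (commute_iff_function_commute.1 (hTU s hsT hsU) x)

theorem add_displacement_mem_moved_iff {x y : ℝ} (hh : Commute h (translate (y - x) h)) :
    x + (h y - y) ∈ moved h ↔ x ∈ moved h := by
  have hmem : h y - (y - x) ∈ moved h ↔ y - (y - x) ∈ moved h := by
    simpa only [moved_translate, mem_preimage, Homeomorph.coe_subRight] using
      apply_mem_moved_iff hh (x := y)
  rw [sub_sub_cancel] at hmem
  rwa [show x + (h y - y) = h y - (y - x) by ring]

theorem add_displacement_mem_frontier_moved_iff {x y : ℝ}
    (hh : Commute h (translate (y - x) h)) :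
    x + (h y - y) ∈ frontier (moved h) ↔ x ∈ frontier (moved h) := by
  have hmem : h y - (y - x) ∈ frontier (moved h) ↔ y - (y - x) ∈ frontier (moved h) := by
    simpa only [frontier_moved_translate, mem_preimage, Homeomorph.coe_subRight] using
      apply_mem_frontier_moved_iff hh (x := y)
  rw [sub_sub_cancel] at hmem
  rwa [show x + (h y - y) = h y - (y - x) by ring]

theorem exists_mem_lt_of_periodic {S : Set ℝ} {c : ℝ} (hS : Function.Periodic (· ∈ S) c)
    (hc : c ≠ 0) (hne : S.Nonempty) (R : ℝ) : ∃ x ∈ S, x < R := by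
  obtain ⟨x, hx⟩ := hne
  have hS' : Function.Periodic (· ∈ S) |c| := by
    rcases abs_choice c with h | h <;> rw [h]
    exacts [hS, hS.neg]
  obtain ⟨y, hy, hxy⟩ := hS'.exists_mem_Ico (abs_pos.2 hc) x (R - |c|)
  exact ⟨y, hxy.mp hx, by linarith [hy.2]⟩

theorem exists_not_commute_translate (hh : Bornology.IsBounded (moved h)) (hh₁ : h ≠ 1) :
    ∃ r, ¬ Commute h (translate r h) := by
  by_contra! hcomm
  obtain ⟨y, hy⟩ := moved_nonempty_iff.2 hh₁
  have hperiodic : Function.Periodic (· ∈ moved h) (h y - y) := fun x =>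
    propext (add_displacement_mem_moved_iff (hcomm (y - x)))
  obtain ⟨R, hR⟩ := hh.bddBelow
  obtain ⟨x, hx, hxR⟩ := exists_mem_lt_of_periodic hperiodic (sub_ne_zero.2 hy) ⟨y, hy⟩ R
  exact (hR hx).not_gt hxR

theorem isTotallyDisconnected_of_interior_eq_empty {S : Set ℝ} (hS : interior S = ∅) :
    IsTotallyDisconnected S :=
  isTotallyDisconnected_iff_lt.2 fun _ _ _ _ hxy =>
    (interior_eq_empty_iff_dense_compl.1 hS).exists_between hxy

-- For `a` in the frontier, `y ↦ a + (h y - y)` maps the half-line `y < a - R` continuously into the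
-- frontier, so `h` is a translation there. Its length is a period of the frontier, which therefore
-- has points, fixed by `h`, in that half-line.
theorem apply_eq_self_of_lt_sub {R : ℝ} (hR : ∀ r < -R, Commute h (translate r h)) {a : ℝ}
    (ha : a ∈ frontier (moved h)) {x : ℝ} (hx : x < a - R) : h x = x := by
  have hdisp : ContinuousOn (fun y => a + (h y - y)) (Iio (a - R)) := by
    have := h.continuous
    fun_prop
  have hmaps : MapsTo (fun y => a + (h y - y)) (Iio (a - R)) (frontier (moved h)) :=
    fun y (hy : y < a - R) =>
      (add_displacement_mem_frontier_moved_iff (hR _ (by linarith))).2 ha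
  have hdisc : IsTotallyDisconnected (frontier (moved h)) := by
    apply isTotallyDisconnected_of_interior_eq_empty
    rw [← frontier_compl]
    exact interior_frontier (isOpen_moved h).isClosed_compl
  have hconst {y : ℝ} (hy : y < a - R) : h y - y = h x - x :=
    add_left_cancel (hdisc _ hmaps.image_subset (isPreconnected_Iio.image _ hdisp)
      (mem_image_of_mem _ hy) (mem_image_of_mem _ hx))
  have hperiodic : Function.Periodic (· ∈ frontier (moved h)) (h x - x) := fun z => by
    obtain ⟨y, hy⟩ := exists_lt (min (a - R) (z - R))
    obtain ⟨hya, hyz⟩ := lt_min_iff.1 hy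
    rw [← hconst hya]
    exact propext (add_displacement_mem_frontier_moved_iff (hR _ (by linarith)))
  by_contra hne
  obtain ⟨y, hy, hya⟩ := exists_mem_lt_of_periodic hperiodic (sub_ne_zero.2 hne) ⟨a, ha⟩ (a - R)
  have hhy : h y = y := not_not.1 fun hmoved =>
    ((isOpen_moved h).frontier_eq ▸ hy).2 hmoved
  exact sub_ne_zero.2 hne (by rw [← hconst hya, hhy, sub_self])

theorem translate_conj_neg (r : ℝ) (g : ℝ ≃ₜ ℝ) :
    translate r (MulAut.conj (Homeomorph.neg ℝ) g) =
      MulAut.conj (Homeomorph.neg ℝ) (translate (-r) g) := by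
  ext x
  change -g (-(x - r)) + r = -(g (-x - -r) + -r)
  ring_nf

theorem apply_eq_self_of_add_lt {R : ℝ} (hR : ∀ r > R, Commute h (translate r h)) {a : ℝ}
    (ha : a ∈ frontier (moved h)) {x : ℝ} (hx : a + R < x) : h x = x := by
  let ν := Homeomorph.neg ℝ
  have hcomm : ∀ r < -R, Commute (MulAut.conj ν h) (translate r (MulAut.conj ν h)) := by
    intro r hr
    rw [translate_conj_neg]
    exact (hR _ (by linarith)).map (MulAut.conj ν)
  have hmem : -a ∈ frontier (moved (MulAut.conj ν h)) := by
    rw [moved_conj, ← ν.image_frontier]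
    exact mem_image_of_mem ν ha
  have hneg : -h (- -x) = -x := apply_eq_self_of_lt_sub hcomm hmem (by linarith)
  rwa [neg_inj, neg_neg] at hneg

theorem isBounded_moved {R : ℝ} (hfix : ∃ x, h x = x)
    (hR : ∀ r, R < |r| → Commute h (translate r h)) : Bornology.IsBounded (moved h) := by
  rcases (moved h).eq_empty_or_nonempty with hempty | hne
  · simp only [hempty, Bornology.isBounded_empty]
  obtain ⟨a, ha⟩ : (frontier (moved h)).Nonempty :=
    nonempty_frontier_iff.2 ⟨hne, (ne_univ_iff_exists_notMem _).2 (hfix.imp fun _ => not_not.2)⟩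
  refine (Metric.isBounded_Icc (a - R) (a + R)).subset fun x hx => ⟨?_, ?_⟩ <;> by_contra! hlt
  · exact hx (apply_eq_self_of_lt_sub (fun r hr => hR r (lt_abs.2 (.inr (by linarith)))) ha hlt)
  · exact hx (apply_eq_self_of_add_lt (fun r hr => hR r (lt_abs.2 (.inl hr))) ha hlt)

end Translate

section Homothety

variable {Γ : Subgroup (ℝ ≃ₜ ℝ)} {f h δ : ℝ ≃ₜ ℝ} {b : ℝ}

theorem symm_apply_of_homothety (hb : b ≠ 0) (hδ : ∀ x, δ x = b * x) (x : ℝ) :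
    δ.symm x = x / b := by
  rw [δ.symm_apply_eq, hδ, mul_div_cancel₀ x hb]

theorem translate_conj_homothety_apply (hb : b ≠ 0) (hδ : ∀ x, δ x = b * x) (r x : ℝ) :
    translate r (MulAut.conj δ h) x = b * h ((x - r) / b) + r := by
  rw [← hδ, ← symm_apply_of_homothety hb hδ]
  rfl

theorem lt_translate_conj_homothety_apply (hlt : ∀ x, x < h x) (hb : 0 < b)
    (hδ : ∀ x, δ x = b * x) (r x : ℝ) : x < translate r (MulAut.conj δ h) x := by
  have := (div_lt_iff₀ hb).1 (hlt ((x - r) / b))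
  rw [translate_conj_homothety_apply hb.ne' hδ]
  linarith

theorem strictMono_translate_conj_homothety (hh : StrictMono h) (hb : 0 < b)
    (hδ : ∀ x, δ x = b * x) (r : ℝ) : StrictMono (translate r (MulAut.conj δ h)) :=
  fun x y hxy => by
    rw [translate_conj_homothety_apply hb.ne' hδ, translate_conj_homothety_apply hb.ne' hδ]
    have := hh (show (x - r) / b < (y - r) / b by gcongr)
    gcongr

-- Here `a = h`, `b = translate t h` and `g` ranges over tiny translated copies of `h` far to the
-- right.
theorem commute_translate_of_lt_apply (hlt : ∀ x, x < h x) {R : ℝ}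
    (hsmall : ∀ ε > 0, ∃ b, 0 < b ∧ b < ε ∧ ∃ δ : ℝ ≃ₜ ℝ, (∀ x, δ x = b * x) ∧
      ∀ r > R, Commute h (translate r (MulAut.conj δ h))) (t : ℝ) :
    Commute h (translate t h) := by
  have hmono : StrictMono h := (h.continuous.strictMono_of_inj h.injective).resolve_right
    fun hanti => (hanti (hlt 0)).not_gt (hlt (h 0))
  have htlt (x : ℝ) : x < translate t h x := by
    have := hlt (x - t)
    rw [translate_apply]
    linarith
  have htmono : StrictMono (translate t h) := fun x y hxy =>
    add_lt_add_left (hmono (sub_lt_sub_right hxy t)) t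
  refine commute_iff_function_commute.2 (commute_of_small_displacement (R := R + |t|)
    hmono htmono hlt htlt fun s hs u hu => ?_)
  have hh₀ : 0 < h (h 0) := (hlt 0).trans (hlt _)
  obtain ⟨b, hb, hbu, δ, hδ, hcomm⟩ := hsmall ((u - s) / h (h 0)) (div_pos (sub_pos.2 hu) hh₀)
  set g := translate s (MulAut.conj δ h)
  have hhg : Commute h g := hcomm s (by linarith [abs_nonneg t])
  have htg : Commute (translate t h) g := by
    have := (hcomm (s - t) (by linarith [le_abs_self t])).map (translate t)
    rwa [translate_translate, add_sub_cancel] at this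
  have hgg : g (g s) = b * h (h 0) + s := by
    rw [translate_conj_homothety_apply hb.ne' hδ, translate_conj_homothety_apply hb.ne' hδ,
      sub_self, zero_div, add_sub_cancel_right, mul_div_cancel_left₀ _ hb.ne']
  refine ⟨g, g.continuous, strictMono_translate_conj_homothety hmono hb hδ s,
    lt_translate_conj_homothety_apply hlt hb hδ s, commute_iff_function_commute.1 hhg,
    commute_iff_function_commute.1 htg, ?_⟩
  have := (lt_div_iff₀ hh₀).1 hbu
  linarith

theorem exists_apply_eq_self {R : ℝ}
    (hsmall : ∀ ε > 0, ∃ b, 0 < b ∧ b < ε ∧ ∃ δ : ℝ ≃ₜ ℝ, (∀ x, δ x = b * x) ∧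
      ∀ r > R, Commute h (translate r (MulAut.conj δ h)))
    {t : ℝ} (ht : ¬ Commute h (translate t h)) : ∃ x, h x = x := by
  by_contra! hne
  obtain ⟨x, hx⟩ : ∃ x, h x ≤ x := by
    by_contra! hlt
    exact ht (commute_translate_of_lt_apply hlt hsmall t)
  have hlt_inv (y : ℝ) : y < h⁻¹ y := by
    by_contra! hle
    have hle' : h⁻¹ y ≤ h (h⁻¹ y) := hle.trans_eq (h.apply_symm_apply y).symm
    obtain ⟨z, hz⟩ := intermediate_value_univ₂ h.continuous continuous_id hx hle'
    exact hne z hz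
  refine ht (Commute.inv_inv_iff.1 ?_)
  rw [← map_inv]
  refine commute_translate_of_lt_apply hlt_inv (R := R) (fun ε hε => ?_) t
  obtain ⟨b, hb, hbε, δ, hδ, hcomm⟩ := hsmall ε hε
  refine ⟨b, hb, hbε, δ, hδ, fun r hr => ?_⟩
  rw [map_inv, map_inv]
  exact (hcomm r hr).inv_inv

theorem commute_translate_conj_homothety {M : ℝ} (hf : moved f ⊆ Metric.ball 0 M) (hb : 0 < b)
    (hb₁ : b ≤ 1) (hδ : ∀ x, δ x = b * x) {r : ℝ} (hr : 2 * M ≤ |r|) :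
    Commute f (translate r (MulAut.conj δ f)) := by
  have hsub : moved (translate r (MulAut.conj δ f)) ⊆ Metric.ball r M := by
    rw [moved_translate, moved_conj]
    rintro x ⟨y, hy, hyx : δ y = x - r⟩
    have hyM : |y| < M := by simpa using hf hy
    rw [Metric.mem_ball, Real.dist_eq, ← hyx, hδ, abs_mul, abs_of_pos hb]
    exact (mul_le_of_le_one_left (abs_nonneg y) hb₁).trans_lt hyM
  refine commute_of_disjoint_moved ((Metric.ball_disjoint_ball ?_).mono hf hsub)
  rwa [dist_zero_left, Real.norm_eq_abs, ← two_mul]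

/-- `Γ` contains a dense set of translations and homotheties `x ↦ b * x` with `b > 0` arbitrarily
small, so that it can move any bounded set into any nonempty open set. -/
structure HasSmallHomotheties (Γ : Subgroup (ℝ ≃ₜ ℝ)) : Prop where
  dense_translation : Dense {t | translation t ∈ Γ}
  exists_homothety : ∀ ε > 0, ∃ b, 0 < b ∧ b < ε ∧ ∃ δ ∈ Γ, ∀ x, δ x = b * x

/-- The additive group of the lengths of the translations in `Γ`. -/
def translationLengths (Γ : Subgroup (ℝ ≃ₜ ℝ)) : AddSubgroup ℝ where
  carrier := {t | translation t ∈ Γ}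
  zero_mem' := by
    have hzero : translation 0 = 1 := Homeomorph.ext add_zero
    rw [mem_ofPred_eq, hzero]
    exact Γ.one_mem
  add_mem' {s t} hs ht := by
    have hadd : translation (s + t) = translation t * translation s :=
      Homeomorph.ext fun x => (add_assoc x s t).symm
    rw [mem_ofPred_eq, hadd]
    exact mul_mem ht hs
  neg_mem' {t} ht := by
    have hneg : translation (-t) = (translation t)⁻¹ := Homeomorph.ext fun _ => rfl
    rw [mem_ofPred_eq, hneg]
    exact inv_mem ht

theorem mul_mem_translationLengths (hδΓ : δ ∈ Γ) (hδ : ∀ x, δ x = b * x) {t : ℝ}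
    (ht : t ∈ translationLengths Γ) : b * t ∈ translationLengths Γ := by
  have hconj : translation (b * t) = δ * translation t * δ⁻¹ := Homeomorph.ext fun x => by
    change x + b * t = δ (δ.symm x + t)
    rw [hδ, mul_add, ← hδ (δ.symm x), δ.apply_symm_apply]
  change translation (b * t) ∈ Γ
  rw [hconj]
  exact mul_mem (mul_mem hδΓ ht) (inv_mem hδΓ)

theorem pow_apply_of_homothety (hδ : ∀ x, δ x = b * x) (m : ℕ) (x : ℝ) :
    (δ ^ m) x = b ^ m * x := by
  induction m with
  | zero => exact (one_mul x).symm
  | succ m ih =>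
    rw [pow_succ', pow_succ', mul_assoc, ← ih]
    exact hδ _

theorem hasSmallHomotheties_of_mem {t c : ℝ} (ht : t ≠ 0) (htΓ : translation t ∈ Γ)
    (hc : 0 < c) (hc₁ : c < 1) (hcΓ : Homeomorph.mulLeft₀ c hc.ne' ∈ Γ) :
    HasSmallHomotheties Γ := by
  have hhomothety (ε : ℝ) (hε : 0 < ε) : ∃ b, 0 < b ∧ b < ε ∧ ∃ δ ∈ Γ, ∀ x, δ x = b * x := by
    obtain ⟨m, hm⟩ := exists_pow_lt_of_lt_one hε hc₁
    exact ⟨c ^ m, pow_pos hc m, hm, _, pow_mem hcΓ m, pow_apply_of_homothety (fun _ => rfl) m⟩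
  refine ⟨(translationLengths Γ).dense_of_not_isolated_zero fun ε hε => ?_, hhomothety⟩
  obtain ⟨b, hb, hbε, δ, hδΓ, hδ⟩ := hhomothety (ε / |t|) (by positivity)
  exact ⟨b * |t|, mul_mem_translationLengths hδΓ hδ (abs_mem_iff.2 htΓ), by positivity,
    (lt_div_iff₀ (abs_pos.2 ht)).1 hbε⟩

theorem HasSmallHomotheties.exists_image_subset (hΓ : HasSmallHomotheties Γ) {B V : Set ℝ}
    (hB : Bornology.IsBounded B) (hV : IsOpen V) (hne : V.Nonempty) : ∃ γ ∈ Γ, γ '' B ⊆ V := by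
  obtain ⟨x, hx⟩ := hne
  obtain ⟨ε, hε, hεV⟩ := Metric.isOpen_iff.1 hV x hx
  obtain ⟨M, hM, hBM⟩ := hB.subset_ball_lt 0 0
  obtain ⟨b, hb, hbε, δ, hδΓ, hδ⟩ := hΓ.exists_homothety (ε / 2 / M) (by positivity)
  obtain ⟨t, htΓ, htx⟩ := hΓ.dense_translation.exists_mem_open
    (Metric.isOpen_ball (x := x) (ε := ε / 2)) ⟨x, Metric.mem_ball_self (half_pos hε)⟩
  refine ⟨translation t * δ, mul_mem htΓ hδΓ, (image_subset_iff.2 fun y hy => ?_).trans hεV⟩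
  have hy : |y| < M := by simpa using hBM hy
  have hδy : |δ y| < ε / 2 := by
    rw [hδ, abs_mul, abs_of_pos hb]
    exact (mul_lt_mul_of_pos_left hy hb).trans ((lt_div_iff₀ hM).1 hbε)
  calc dist (δ y + t) x ≤ dist (δ y + t) t + dist t x := dist_triangle _ _ _
    _ < ε / 2 + ε / 2 := by
      gcongr
      · simpa [Real.dist_eq] using hδy
      · exact htx
    _ = ε := add_halves ε

theorem SameCommutingConjugates.eq_of_isBounded_moved (hfh : SameCommutingConjugates Γ f h)
    (hΓ : HasSmallHomotheties Γ) (hf : Bornology.IsBounded (moved f)) (hf₁ : f ≠ 1) : h = f := by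
  obtain ⟨M, hM⟩ := hf.subset_ball 0
  have hcomm {b : ℝ} {δ : ℝ ≃ₜ ℝ} (hb : 0 < b) (hb₁ : b ≤ 1) (hδΓ : δ ∈ Γ)
      (hδ : ∀ x, δ x = b * x) {r : ℝ} (hr : 2 * M < |r|) :
      Commute h (translate r (MulAut.conj δ h)) := by
    refine commute_translate_of_dense hΓ.dense_translation
      (isOpen_lt continuous_const continuous_abs) (fun s hs (hsM : 2 * M < |s|) => ?_) hr
    rw [← conj_translation_mul, ← hfh.commute_conj_iff (mul_mem hs hδΓ), conj_translation_mul]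
    exact commute_translate_conj_homothety hM hb hb₁ hδ hsM.le
  obtain ⟨t, ht⟩ : ∃ t, ¬ Commute h (translate t h) := by
    by_contra! hall
    obtain ⟨r, hr⟩ := exists_not_commute_translate hf hf₁
    exact hr (commute_translate_of_dense hΓ.dense_translation isOpen_univ
      (fun s hs _ => (hfh.commute_conj_iff hs).2 (hall s)) (mem_univ r))
  have hfix : ∃ x, h x = x := exists_apply_eq_self (R := 2 * M) (fun ε hε => by
    obtain ⟨b, hb, hbε, δ, hδΓ, hδ⟩ := hΓ.exists_homothety (min ε 1) (lt_min hε one_pos)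
    obtain ⟨hbε, hb₁⟩ := lt_min_iff.1 hbε
    exact ⟨b, hb, hbε, δ, hδ, fun r hr => hcomm hb hb₁.le hδΓ hδ (lt_abs.2 (.inl hr))⟩) ht
  have hh : Bornology.IsBounded (moved h) := isBounded_moved hfix fun r hr => by
    simpa only [map_one, MulAut.one_apply] using
      hcomm one_pos le_rfl Γ.one_mem (fun x => (one_mul x).symm) hr
  have hh₁ : h ≠ 1 := by
    rintro rfl
    exact ht (Commute.one_left _)
  exact eq_of_sameCommutingConjugates
    (fun V hV hne => hΓ.exists_image_subset (hf.union hh) hV hne)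
    subset_union_left subset_union_right hh₁ hfh

end Homothety

section BaumslagSolitar

variable {n : ℕ} {hn : 2 ≤ n}

theorem translation_one_mem_BSgroup : translation 1 ∈ BSgroup n hn :=
  Subgroup.subset_closure (mem_insert_of_mem _ rfl)

theorem mulLeft₀_inv_mem_BSgroup (hn₀ : (n : ℝ)⁻¹ ≠ 0) :
    Homeomorph.mulLeft₀ (n : ℝ)⁻¹ hn₀ ∈ BSgroup n hn := by
  have hinv : Homeomorph.mulLeft₀ (n : ℝ)⁻¹ hn₀ = (dilation n hn)⁻¹ :=
    Homeomorph.ext fun _ => rfl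
  exact hinv ▸ inv_mem (Subgroup.subset_closure (mem_insert _ _))

end BaumslagSolitar

end BSRecognition

open BSRecognition in
theorem BS_recognizes_compactly_supported_general {Γ : Subgroup (ℝ ≃ₜ ℝ)} {t c : ℝ} (ht : t ≠ 0)
    (htΓ : translation t ∈ Γ) (hc : 0 < c) (hc₁ : c < 1)
    (hcΓ : Homeomorph.mulLeft₀ c hc.ne' ∈ Γ) {f : ℝ ≃ₜ ℝ} (hfc : IsCompact (Supp f))
    (φ : Subgroup.closure ((Γ : Set (ℝ ≃ₜ ℝ)) ∪ {f}) →* (ℝ ≃ₜ ℝ)) (hφ : Function.Injective φ)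
    (hφΓ : ∀ (γ : ℝ ≃ₜ ℝ) (hγ : γ ∈ Γ),
      φ ⟨γ, Subgroup.subset_closure (mem_union_left _ hγ)⟩ = γ) :
    φ ⟨f, Subgroup.subset_closure (mem_union_right _ (mem_singleton f))⟩ = f := by
  by_cases hf₁ : f = 1
  · subst hf₁
    exact hφΓ 1 Γ.one_mem
  · exact (sameCommutingConjugates_of_injective φ hφ hφΓ).eq_of_isBounded_moved
      (hasSmallHomotheties_of_mem ht htΓ hc hc₁ hcΓ) (hfc.isBounded.subset subset_closure) hf₁

theorem BS_recognizes_compactly_supported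
    (n : ℕ) (hn : 2 ≤ n) (f h : ℝ ≃ₜ ℝ)
    (hfmono : StrictMono f) (hhmono : StrictMono h)
    (hfc : IsCompact (Supp f))
    (φ : Subgroup.closure ((BSgroup n hn : Set (ℝ ≃ₜ ℝ)) ∪ {f}) ≃*
         Subgroup.closure ((BSgroup n hn : Set (ℝ ≃ₜ ℝ)) ∪ {h}))
    (hφΓ : ∀ (γ : ℝ ≃ₜ ℝ) (hγ : γ ∈ BSgroup n hn),
      ((φ ⟨γ, Subgroup.subset_closure (Set.mem_union_left _ hγ)⟩ : _) : ℝ ≃ₜ ℝ) = γ)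
    (hφf : ((φ ⟨f, Subgroup.subset_closure
        (Set.mem_union_right _ (Set.mem_singleton f))⟩ : _) : ℝ ≃ₜ ℝ) = h) :
    h = f := by
  have hn₁ : (1 : ℝ) < n := by exact_mod_cast hn
  exact hφf.symm.trans (BS_recognizes_compactly_supported_general one_ne_zero
    BSRecognition.translation_one_mem_BSgroup (inv_pos.2 (zero_lt_one.trans hn₁))
    (inv_lt_one_of_one_lt₀ hn₁) (BSRecognition.mulLeft₀_inv_mem_BSgroup _) hfc
    ((Subgroup.subtype _).comp φ.toMonoidHom) (Subtype.val_injective.comp φ.injective) hφΓ)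
end

section
/- Fix an integer n ≥ 2 and let h ∈ Homeo₊(ℝ) be a homeomorphism that is not a translation. Then the following are equivalent: (1) h has compact support; (2) there exists a compact set K ⊆ ℝ such that h commutes with u ∘ h ∘ u⁻¹ for every u ∈ BS(1,n) with u(K) ∩ K = ∅, and moreover for every γ ∈ BS(1,n), writing g = h ∘ γ ∘ h⁻¹ ∘ γ⁻¹, there exists a compact set K' ⊆ ℝ such that g commutes with u ∘ g ∘ u⁻¹ for every u ∈ BS(1,n) with u(K') ∩ K' = ∅. -/
open Set Topology

/-!
Only the translations in `BS(1,n)` matter, and they are dense: by continuity `h` commutes with its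
conjugates by *all* far translations.

If `h` has a fixed point `x`, then `x + (h y - y)` is again a fixed point for every `y` far away. If
`h` moved points arbitrarily far away, these would fill an interval to the right of `x`, even when
`x` is the left end of an interval of moved points. So `h` has compact support.

If `h` moves every point to the right, let `φ x = h x - x`. For a translation amount `s` in the
group with `s` large, the commutator of `h` and the translation by `s` commutes with `h`; once it
has a fixed point, it is trivial near infinity by the first case, hence everywhere, since powers of
`h` carry every point to infinity. In terms of `φ`: either `φ (x + s) ≠ φ x` for all `x`, or `s` is
a period. It follows that `φ` is constant or that it tends to its supremum at one end of the line.
In the latter case the supremum is finite, because a far conjugate of `h` much larger than `h ∘ h`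
on one fundamental domain would be so everywhere; so the conjugates of `h` converge to a
translation commuting with `h`, and `φ` is periodic. A periodic `φ` attains a maximum, at which the
graphs of `φ` and its shift by `s` must meet, so every large `s` is a period and `φ` is constant.
-/

open Filter Function

open scoped Pointwise

/-! ### Order automorphisms moving every point up -/

section OrderIsoDynamics

variable {α : Type*}

lemma pow_apply_le_pow_apply [Preorder α] {f g : α ≃o α} (h : ∀ x, f x ≤ g x) (m : ℕ) (x : α) :
    (f ^ m) x ≤ (g ^ m) x := by
  induction m with
  | zero => simp
  | succ m ih =>
    simp only [pow_succ', RelIso.mul_apply]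
    exact (f.monotone ih).trans (h _)

lemma strictMono_zpow_apply [Preorder α] {f : α ≃o α} (hf : ∀ x, x < f x) (x : α) :
    StrictMono fun k : ℤ => (f ^ k) x :=
  strictMono_int_of_lt_succ fun k => by
    simpa only [add_comm k, zpow_one_add, RelIso.mul_apply] using hf ((f ^ k) x)

variable [ConditionallyCompleteLinearOrder α] {f : α ≃o α}

lemma tendsto_pow_apply_atTop (hf : ∀ x, x < f x) (x : α) :
    Tendsto (fun m : ℕ => (f ^ m) x) atTop atTop := by
  have hmono : Monotone fun m : ℕ => (f ^ m) x := fun m n hmn => by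
    simpa only [zpow_natCast] using (strictMono_zpow_apply hf x).monotone (Int.ofNat_le.mpr hmn)
  refine tendsto_atTop_atTop_of_monotone' hmono fun hbdd => ?_
  -- A finite supremum of the orbit would be fixed by `f`.
  refine (hf (⨆ m : ℕ, (f ^ m) x)).not_ge ?_
  rw [f.map_ciSup hbdd]
  exact ciSup_le fun m => (le_ciSup hbdd (m + 1)).trans_eq' (by
    simp only [pow_succ', RelIso.mul_apply])

lemma exists_zpow_apply_mem_Ico (hf : ∀ x, x < f x) (a x : α) :
    ∃ k : ℤ, (f ^ k) x ∈ Ico a (f a) := by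
  obtain ⟨m, hm⟩ := ((tendsto_pow_apply_atTop hf a).eventually_ge_atTop (f x)).exists
  obtain ⟨n, hn⟩ := ((tendsto_pow_apply_atTop hf x).eventually_ge_atTop a).exists
  have hbound (k : ℤ) (hk : (f ^ k) a ≤ x) : k ≤ m :=
    (strictMono_zpow_apply hf a).le_iff_le.mp <|
      hk.trans ((hf x).le.trans (by simpa only [zpow_natCast] using hm))
  have hne : (f ^ (-n : ℤ)) a ≤ x := by
    rw [← (f ^ (n : ℤ)).le_iff_le, ← RelIso.mul_apply, ← zpow_add]
    simpa using hn
  obtain ⟨k, hk, hmax⟩ := Int.exists_greatest_of_bdd ⟨m, hbound⟩ ⟨_, hne⟩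
  refine ⟨-k, ?_, ?_⟩
  · rw [← (f ^ k).le_iff_le, ← RelIso.mul_apply, ← zpow_add]
    simpa using hk
  · by_contra! hle
    rw [← (f ^ k).le_iff_le, ← RelIso.mul_apply, ← RelIso.mul_apply, ← zpow_add,
      ← zpow_add_one] at hle
    exact (hmax (k + 1) (by simpa using hle)).not_gt (lt_add_one k)

/- `Ico a (f a)` is a fundamental domain for the action of `f`. -/
lemma apply_le_apply_of_commute_of_forall_mem_Ico (hf : ∀ x, x < f x) {F G : α ≃o α}
    (hF : Commute F f) (hG : Commute G f) {a : α} (hle : ∀ x ∈ Ico a (f a), G x ≤ F x) (x : α) :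
    G x ≤ F x := by
  obtain ⟨k, hk⟩ := exists_zpow_apply_mem_Ico hf a x
  rw [← (f ^ k).le_iff_le, ← RelIso.mul_apply, ← RelIso.mul_apply, ← (hF.zpow_right k).eq,
    ← (hG.zpow_right k).eq]
  exact hle _ hk

lemma eq_one_of_commute_of_eventually_isFixedPt (hf : ∀ x, x < f x) {g : α ≃o α}
    (hg : Commute g f) (hfix : ∀ᶠ x in atTop, IsFixedPt g x) : g = 1 := by
  ext x
  obtain ⟨m, hm⟩ := ((tendsto_pow_apply_atTop hf x).eventually hfix).exists
  have hcomm : g ((f ^ m) x) = (f ^ m) (g x) := DFunLike.congr_fun (hg.pow_right m).eq x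
  exact (f ^ m).injective (hcomm.symm.trans hm)

end OrderIsoDynamics

lemma eventually_atTop_mem_of_dense {β : Type*} [TopologicalSpace β] [LinearOrder β]
    [ClosedIicTopology β] [NoMaxOrder β] [Nonempty β] {D A : Set β} (hD : Dense D) (hA : IsClosed A)
    (h : ∀ᶠ s in atTop, s ∈ D → s ∈ A) : ∀ᶠ s in atTop, s ∈ A := by
  obtain ⟨T, hT⟩ := eventually_atTop.mp h
  filter_upwards [eventually_gt_atTop T] with s hs
  exact closure_minimal (fun s hs => hT s (le_of_lt hs.1) hs.2) hA
    (hD.open_subset_closure_inter isOpen_Ioi hs)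

/-! ### Functions whose far shifts are disjoint or equal -/

section ShiftDichotomy

/-- For `D` a set of shifts, every sufficiently large shift in `D` either moves the graph of `φ` off
itself or is a period of `φ`. -/
def ShiftDichotomy (D : Set ℝ) (φ : ℝ → ℝ) : Prop :=
  ∀ᶠ s in atTop, s ∈ D → (∃ x, φ (x + s) = φ x) → Periodic φ s

/-- Along `l`, the function `φ` eventually dominates each of its values, uniformly on bounded
windows. The supremum of `φ` need not be finite. -/
def ApproachesSup (φ : ℝ → ℝ) (l : Filter ℝ) : Prop :=
  ∀ y a b, ∀ᶠ z in l, ∀ x ∈ Icc a b, φ y ≤ φ (z + x)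

variable {φ : ℝ → ℝ} {D : Set ℝ} {l : Filter ℝ}

lemma approachesSup_atTop (h : ∀ᶠ s in atTop, ∀ x, φ x ≤ φ (x + s)) : ApproachesSup φ atTop := by
  intro y a b
  obtain ⟨T, hT⟩ := eventually_atTop.mp h
  filter_upwards [eventually_ge_atTop (y + T - a)] with z hz x hx
  simpa using hT (z + x - y) (by linarith [hx.1]) y

lemma approachesSup_atBot (h : ∀ᶠ s in atTop, ∀ x, φ (x + s) ≤ φ x) : ApproachesSup φ atBot := by
  intro y a b
  obtain ⟨T, hT⟩ := eventually_atTop.mp h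
  filter_upwards [eventually_le_atBot (y - T - b)] with z hz x hx
  simpa using hT (y - (z + x)) (by linarith [hx.2]) (z + x)

lemma ApproachesSup.tendsto_ciSup (h : ApproachesSup φ l) (hbdd : BddAbove (range φ)) (c : ℝ) :
    Tendsto (fun z => φ (z + c)) l (𝓝 (⨆ x, φ x)) := by
  refine tendsto_order.mpr ⟨fun a ha => ?_, fun a ha => .of_forall fun z =>
    (le_ciSup hbdd _).trans_lt ha⟩
  obtain ⟨y, hy⟩ := exists_lt_of_lt_ciSup ha
  filter_upwards [h y c c] with z hz
  exact hy.trans_le (hz c ⟨le_rfl, le_rfl⟩)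

lemma isClosed_setOf_forall_le_add (hφ : Continuous φ) :
    IsClosed {s | ∀ x, φ x ≤ φ (x + s)} := by
  rw [ofPred_forall]
  exact isClosed_iInter fun x => isClosed_le (by fun_prop) (by fun_prop)

lemma isClosed_setOf_forall_add_le (hφ : Continuous φ) :
    IsClosed {s | ∀ x, φ (x + s) ≤ φ x} := by
  rw [ofPred_forall]
  exact isClosed_iInter fun x => isClosed_le (by fun_prop) (by fun_prop)

/- At a maximum of `φ` the difference `φ (x + s) - φ x` is nonpositive, and at the same point
shifted by `-s` it is nonnegative; hence every large `s ∈ D` is a period. -/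
lemma ShiftDichotomy.eq_of_periodic (hdich : ShiftDichotomy D φ) (hD : Dense D)
    (hφ : Continuous φ) {L : ℝ} (hL : L ≠ 0) (hper : Periodic φ L) (x y : ℝ) : φ x = φ y := by
  obtain ⟨_, ⟨m, rfl⟩, hm⟩ :=
    (hper.compact_of_continuous hL hφ).exists_isGreatest (range_nonempty φ)
  have hmax (x : ℝ) : φ x ≤ φ m := hm (mem_range_self x)
  have hclosed : IsClosed {s | Periodic φ s} := by
    simp only [Periodic, ofPred_forall]
    exact isClosed_iInter fun x => isClosed_eq (by fun_prop) (by fun_prop)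
  have hperiods : ∀ᶠ s in atTop, Periodic φ s := by
    refine eventually_atTop_mem_of_dense hD hclosed (hdich.mono fun s hs hsD => hs hsD ?_)
    exact intermediate_value_univ₂ (b := m - s) (by fun_prop) hφ (hmax (m + s))
      (by simpa using hmax (m - s))
  obtain ⟨s, hs, hs'⟩ :=
    (hperiods.and <|
      (tendsto_atTop_add_const_left atTop (x - y) tendsto_id).eventually hperiods).exists
  calc φ x = φ (x + s) := (hs x).symm
    _ = φ (y + (x - y + s)) := by ring_nf
    _ = φ y := hs' y

lemma ShiftDichotomy.eventually_forall_le_or_forall_ge (hdich : ShiftDichotomy D φ) (hD : Dense D)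
    (hφ : Continuous φ) :
    ∀ᶠ s in atTop, (∀ x, φ x ≤ φ (x + s)) ∨ ∀ x, φ (x + s) ≤ φ x := by
  refine eventually_atTop_mem_of_dense
    (A := {s | ∀ x, φ x ≤ φ (x + s)} ∪ {s | ∀ x, φ (x + s) ≤ φ x}) hD
    ((isClosed_setOf_forall_le_add hφ).union (isClosed_setOf_forall_add_le hφ))
    (hdich.mono fun s hs hsD => ?_)
  by_cases hmeet : ∃ x, φ (x + s) = φ x
  · exact .inl fun x => (hs hsD hmeet x).ge
  rw [mem_union, mem_ofPred_eq, mem_ofPred_eq]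
  contrapose! hmeet
  obtain ⟨⟨x, hx⟩, ⟨y, hy⟩⟩ := hmeet
  exact intermediate_value_univ₂ (by fun_prop) hφ hx.le hy.le

/- The half-line of large shifts is connected: if it is covered by the two closed sets of shifts `s`
for which `φ (x + s) - φ x` has constant sign, but by neither alone, then they share a period. -/
lemma ShiftDichotomy.eq_or_exists_approachesSup (hdich : ShiftDichotomy D φ) (hD : Dense D)
    (hφ : Continuous φ) :
    (∀ x y, φ x = φ y) ∨ ∃ l : Filter ℝ, l.NeBot ∧ l ≤ cocompact ℝ ∧ ApproachesSup φ l := by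
  obtain ⟨T, hT⟩ := eventually_atTop.mp
    ((hdich.eventually_forall_le_or_forall_ge hD hφ).and (eventually_gt_atTop 0))
  by_cases hup : ∀ s ∈ Ici T, ∀ x, φ x ≤ φ (x + s)
  · exact .inr ⟨atTop, inferInstance, atTop_le_cocompact,
      approachesSup_atTop ((eventually_ge_atTop T).mono hup)⟩
  by_cases hdown : ∀ s ∈ Ici T, ∀ x, φ (x + s) ≤ φ x
  · exact .inr ⟨atBot, inferInstance, atBot_le_cocompact,
      approachesSup_atBot ((eventually_ge_atTop T).mono hdown)⟩
  left
  push Not at hup hdown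
  obtain ⟨s₁, hs₁, x₁, hx₁⟩ := hup
  obtain ⟨s₂, hs₂, x₂, hx₂⟩ := hdown
  obtain ⟨s, hs, hle, hge⟩ := isPreconnected_closed_iff.mp isPreconnected_Ici
    {s | ∀ x, φ x ≤ φ (x + s)} {s | ∀ x, φ (x + s) ≤ φ x}
    (isClosed_setOf_forall_le_add hφ) (isClosed_setOf_forall_add_le hφ)
    (fun s hs => (hT s hs).1)
    ⟨s₂, hs₂, (hT s₂ hs₂).1.resolve_right fun h => (h x₂).not_gt hx₂⟩
    ⟨s₁, hs₁, (hT s₁ hs₁).1.resolve_left fun h => (h x₁).not_gt hx₁⟩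
  exact hdich.eq_of_periodic hD hφ (hT s hs).2.ne' fun x => (hge x).antisymm (hle x)

end ShiftDichotomy

/-! ### Automorphisms of the line commuting with their far translates -/

section FarTranslates

/-- The conjugate of `f` by the translation `x ↦ x + t`, whose graph is the graph of `f` moved by
`(t, t)`. -/
def conjShift (t : ℝ) (f : ℝ ≃o ℝ) : ℝ ≃o ℝ :=
  OrderIso.addRight t * f * (OrderIso.addRight t)⁻¹

/-- The commutation hypothesis of the theorem, in the form it takes for all real translations once
those in the group are known to be dense. -/
def CommutesWithFarTranslates (f : ℝ ≃o ℝ) : Prop :=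
  ∀ᶠ t in cocompact ℝ, Commute f (conjShift t f)

/-- The displacement `f - id`. Its shifts are the displacements of the conjugates of `f` by
translations. -/
def displacement (f : ℝ → ℝ) (x : ℝ) : ℝ := f x - x

variable {f : ℝ ≃o ℝ}

lemma conjShift_apply (t : ℝ) (f : ℝ ≃o ℝ) (x : ℝ) : conjShift t f x = f (x - t) + t := by
  rw [sub_eq_add_neg]
  rfl

lemma conjShift_pow (t : ℝ) (f : ℝ ≃o ℝ) (m : ℕ) : conjShift t f ^ m = conjShift t (f ^ m) :=
  conj_pow

lemma conjShift_inv (t : ℝ) (f : ℝ ≃o ℝ) : conjShift t f⁻¹ = (conjShift t f)⁻¹ :=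
  conj_inv.symm

lemma isFixedPt_conjShift_iff {t x : ℝ} : IsFixedPt (conjShift t f) x ↔ IsFixedPt f (x - t) := by
  rw [IsFixedPt, IsFixedPt, conjShift_apply, eq_sub_iff_add_eq]

lemma CommutesWithFarTranslates.inv (h : CommutesWithFarTranslates f) :
    CommutesWithFarTranslates f⁻¹ :=
  h.mono fun t ht => by
    rw [conjShift_inv]
    exact ht.inv_inv

lemma continuous_displacement {f : ℝ → ℝ} (hf : Continuous f) : Continuous (displacement f) :=
  hf.sub continuous_id

lemma displacement_add_eq_iff {f : ℝ → ℝ} {x s : ℝ} :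
    displacement f (x + s) = displacement f x ↔ f (x + s) = f x + s := by
  unfold displacement
  constructor <;> intro h <;> linarith

lemma conjShift_neg_apply (f : ℝ ≃o ℝ) (z x : ℝ) :
    conjShift (-z) f x = x + displacement f (z + x) := by
  rw [conjShift_apply, displacement, sub_neg_eq_add, add_comm z x]
  ring

section FixedPoints

lemma CommutesWithFarTranslates.exists_forall_commute (h : CommutesWithFarTranslates f) :
    ∃ T > 0, ∀ t, T ≤ |t| → Commute f (conjShift t f) := by
  rw [CommutesWithFarTranslates, cocompact_eq_atBot_atTop, ← comap_abs_atTop,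
    eventually_comap] at h
  obtain ⟨T, hT⟩ := eventually_atTop.mp ((eventually_gt_atTop 0).and h)
  exact ⟨T, (hT T le_rfl).1, fun t ht => (hT _ ht).2 t rfl⟩

/- The conjugate of `f` by the translation from `x` to `y` fixes `y`. As it commutes with `f`, it
also fixes `f y`. -/
lemma isFixedPt_add_displacement {x y : ℝ} (hcomm : Commute f (conjShift (y - x) f))
    (hx : IsFixedPt f x) : IsFixedPt f (x + displacement f y) := by
  have hy : IsFixedPt (conjShift (y - x) f) y := by
    rwa [isFixedPt_conjShift_iff, sub_sub_cancel]
  have hfy : IsFixedPt (conjShift (y - x) f) (f y) :=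
    hy.map fun z => DFunLike.congr_fun hcomm.eq z
  rw [isFixedPt_conjShift_iff] at hfy
  convert hfy using 1
  rw [displacement]
  ring

lemma isFixedPt_sub_displacement {x y : ℝ} (hcomm : Commute f (conjShift (f y - x) f))
    (hx : IsFixedPt f x) : IsFixedPt f (x - displacement f y) := by
  have hinv : IsFixedPt (f⁻¹ : ℝ ≃o ℝ) (x + displacement (f⁻¹ : ℝ ≃o ℝ) (f y)) := by
    refine isFixedPt_add_displacement ?_ (f.symm_apply_eq.mpr hx.symm)
    rw [conjShift_inv]
    exact hcomm.inv_inv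
  have hfix := f.symm_apply_eq.mp hinv
  rw [displacement, RelIso.inv_apply_self] at hfix
  rw [displacement, IsFixedPt, sub_sub_eq_add_sub, add_sub_assoc]
  exact hfix.symm

section Cofinal

variable {T : ℝ} (hcomm : ∀ t, T ≤ |t| → Commute f (conjShift t f))
include hcomm

lemma isFixedPt_add_abs_displacement {x y : ℝ} (hx : IsFixedPt f x) (hy : x + T ≤ y)
    (hfy : x + T ≤ f y) : IsFixedPt f (x + |displacement f y|) := by
  obtain habs | habs := abs_choice (displacement f y)
  · rw [habs]
    exact isFixedPt_add_displacement (hcomm _ (le_abs.mpr (.inl (by linarith)))) hx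
  · rw [habs, ← sub_eq_add_neg]
    exact isFixedPt_sub_displacement (hcomm _ (le_abs.mpr (.inl (by linarith)))) hx

lemma not_bddAbove_fixedPoints (hT : 0 < T) (hne : (fixedPoints f).Nonempty) :
    ¬ BddAbove (fixedPoints f) := by
  intro hbdd
  set c := sSup (fixedPoints f)
  have hc : IsFixedPt f c := (isClosed_fixedPoints f.continuous).csSup_mem hne hbdd
  set d := max (c + T) (f.symm (c + T))
  have hfd : c + T ≤ f d := f.symm_apply_le.mp (le_max_right _ _)
  have hle : c + |displacement f d| ≤ c :=
    le_csSup hbdd (isFixedPt_add_abs_displacement hcomm hc (le_max_left _ _) hfd)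
  have hd : IsFixedPt f d :=
    sub_eq_zero.mp (abs_eq_zero.mp ((add_le_iff_nonpos_right c).mp hle |>.antisymm (abs_nonneg _)))
  linarith [le_csSup hbdd hd, le_max_left (c + T) (f.symm (c + T))]

/- Between `z` and `y` the displacement takes all absolute values up to that at `y`. -/
lemma isFixedPt_add_of_le_abs_displacement {x z y e : ℝ} (hx : IsFixedPt f x) (hz : IsFixedPt f z)
    (hxz : x + T ≤ z) (hzy : z ≤ y) (he : e ∈ Icc 0 |displacement f y|) :
    IsFixedPt f (x + e) := by
  have hcont : ContinuousOn (fun w => |displacement f w|) (Icc z y) :=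
    (continuous_displacement f.continuous).abs.continuousOn
  have hz0 : |displacement f z| = 0 := abs_eq_zero.mpr (sub_eq_zero.mpr hz)
  obtain ⟨w, hw, rfl⟩ := intermediate_value_Icc hzy hcont (by rwa [hz0])
  exact isFixedPt_add_abs_displacement hcomm hx (hxz.trans hw.1)
    (hxz.trans (hz.ge.trans (f.monotone hw.1)))

/- Suppose points arbitrarily far to the right are moved, and let `s` be the last fixed point before
one of them. Displacements of moved points `y` far to the right put fixed points immediately after
`s`: by `isFixedPt_add_of_le_abs_displacement` they fill `[s, s + |f y - y|]`. -/
lemma eventually_atTop_isFixedPt (hT : 0 < T) {x₀ : ℝ} (hx₀ : IsFixedPt f x₀) :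
    ∀ᶠ x in atTop, IsFixedPt f x := by
  by_contra hfreq
  replace hfreq := frequently_atTop.mp (not_eventually.mp hfreq)
  obtain ⟨y₁, hy₁, hmoved₁⟩ := hfreq x₀
  obtain ⟨s, ⟨⟨hs₀, hs₁⟩, hs⟩, hmax⟩ :=
    (isCompact_Icc.inter_right (isClosed_fixedPoints f.continuous)).exists_isGreatest
      ⟨x₀, ⟨le_rfl, hy₁⟩, hx₀⟩
  obtain ⟨z, hz, hz₁⟩ :=
    not_bddAbove_iff.mp (not_bddAbove_fixedPoints hcomm hT ⟨x₀, hx₀⟩) (y₁ + T)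
  obtain ⟨y₂, hy₂, hmoved₂⟩ := hfreq z
  have hlt : s < y₁ := hs₁.lt_of_ne (by rintro rfl; exact hmoved₁ hs)
  have hpos : 0 < |displacement f y₂| := abs_pos.mpr (sub_ne_zero.mpr hmoved₂)
  set e := min |displacement f y₂| (y₁ - s)
  have he : 0 < e := lt_min hpos (sub_pos.mpr hlt)
  have hfix : IsFixedPt f (s + e) := isFixedPt_add_of_le_abs_displacement hcomm hs hz
    (by linarith) hy₂ ⟨he.le, min_le_left _ _⟩
  have hmem : s + e ≤ y₁ := by linarith [min_le_right |displacement f y₂| (y₁ - s)]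
  linarith [hmax ⟨⟨hs₀.trans (by linarith), hmem⟩, hfix⟩]

end Cofinal

/-- Conjugation by `x ↦ -x`, which exchanges the two ends of the line. -/
def reflect : (ℝ ≃o ℝ) →* (ℝ ≃o ℝ) where
  toFun f := (OrderIso.neg ℝ).trans (f.dual.trans (OrderIso.neg ℝ).symm)
  map_one' := by
    ext x
    exact neg_neg x
  map_mul' f g := by ext; simp

lemma reflect_apply (f : ℝ ≃o ℝ) (x : ℝ) : reflect f x = -f (-x) := rfl

lemma isFixedPt_reflect_iff {x : ℝ} : IsFixedPt (reflect f) x ↔ IsFixedPt f (-x) := by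
  rw [IsFixedPt, reflect_apply, neg_eq_iff_eq_neg, IsFixedPt]

lemma conjShift_reflect (t : ℝ) (f : ℝ ≃o ℝ) :
    conjShift t (reflect f) = reflect (conjShift (-t) f) := by
  ext x
  simp only [conjShift_apply, reflect_apply, neg_add, neg_neg, neg_sub', sub_neg_eq_add]

lemma CommutesWithFarTranslates.eventually_neg (h : CommutesWithFarTranslates f) :
    ∀ᶠ t in cocompact ℝ, Commute f (conjShift (-t) f) :=
  (Homeomorph.neg ℝ).isClosedEmbedding.tendsto_cocompact.eventually h

lemma CommutesWithFarTranslates.reflect (h : CommutesWithFarTranslates f) :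
    CommutesWithFarTranslates (reflect f) :=
  h.eventually_neg.mono fun t ht => by
    rw [conjShift_reflect]
    exact ht.map _

lemma CommutesWithFarTranslates.eventually_isFixedPt (h : CommutesWithFarTranslates f) {x₀ : ℝ}
    (hx₀ : IsFixedPt f x₀) : ∀ᶠ x in cocompact ℝ, IsFixedPt f x := by
  rw [cocompact_eq_atBot_atTop, eventually_sup]
  obtain ⟨T, hT, hcomm⟩ := h.exists_forall_commute
  obtain ⟨T', hT', hcomm'⟩ := h.reflect.exists_forall_commute
  refine ⟨?_, eventually_atTop_isFixedPt hcomm hT hx₀⟩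
  have hleft := eventually_atTop_isFixedPt hcomm' hT' (x₀ := -x₀)
    (isFixedPt_reflect_iff.mpr (by rwa [neg_neg]))
  filter_upwards [tendsto_neg_atBot_atTop.eventually hleft] with x hx
  rwa [isFixedPt_reflect_iff, neg_neg] at hx

end FixedPoints

section FixedPointFree

lemma not_forall_apply_apply_le_conjShift (hf : ∀ x, x < f x) (t : ℝ) :
    ¬ ∀ x, f (f x) ≤ conjShift t f x := by
  intro hle
  have hpow (m : ℕ) (x : ℝ) : (f ^ m) ((f ^ m) x) ≤ (f ^ m) (x - t) + t := by
    calc (f ^ m) ((f ^ m) x) = ((f * f) ^ m) x := by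
          rw [(Commute.refl f).mul_pow, RelIso.mul_apply]
      _ ≤ (conjShift t f ^ m) x := pow_apply_le_pow_apply hle m x
      _ = (f ^ m) (x - t) + t := by rw [conjShift_pow, conjShift_apply]
  obtain ht | ht := le_or_gt 0 t
  · obtain ⟨m, hm⟩ := ((tendsto_pow_apply_atTop hf 0).eventually_gt_atTop t).exists
    have hx := hpow m ((f ^ m).symm 0)
    rw [OrderIso.apply_symm_apply] at hx
    have hshift : (f ^ m) ((f ^ m).symm 0 - t) ≤ (f ^ m) ((f ^ m).symm 0) :=
      (f ^ m).monotone (sub_le_self _ ht)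
    rw [OrderIso.apply_symm_apply] at hshift
    linarith
  · obtain ⟨m, hm⟩ := ((tendsto_pow_apply_atTop hf 0).eventually_gt_atTop (0 - t)).exists
    linarith [hpow m 0, (f ^ m).monotone hm.le]

lemma bddAbove_range_displacement (hf : ∀ x, x < f x) (hcomm : CommutesWithFarTranslates f)
    {l : Filter ℝ} [l.NeBot] (hl : l ≤ cocompact ℝ) (hsup : ApproachesSup (displacement f) l) :
    BddAbove (range (displacement f)) := by
  by_contra hbdd
  obtain ⟨_, ⟨y, rfl⟩, hy⟩ := not_bddAbove_iff.mp hbdd (f (f (f 0)))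
  obtain ⟨z, hzcomm, hz⟩ :=
    ((hcomm.eventually_neg.filter_mono hl).and (hsup y 0 (f 0))).exists
  refine not_forall_apply_apply_le_conjShift hf (-z) fun x =>
    apply_le_apply_of_commute_of_forall_mem_Ico hf (G := f * f) hzcomm.symm
      ((Commute.refl f).mul_left (Commute.refl f)) (a := 0) (fun x hx => ?_) x
  calc f (f x) ≤ f (f (f 0)) := f.monotone (f.monotone hx.2.le)
    _ ≤ displacement f y := hy.le
    _ ≤ displacement f (z + x) := hz x ⟨hx.1, hx.2.le⟩
    _ ≤ x + displacement f (z + x) := le_add_of_nonneg_left hx.1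
    _ = conjShift (-z) f x := (conjShift_neg_apply f z x).symm

/- The conjugates of `f` by the translations `-z` converge along `l` to the translation by the
supremum of the displacement, so `f` commutes with this translation. -/
lemma periodic_displacement_ciSup (hcomm : CommutesWithFarTranslates f)
    {l : Filter ℝ} [l.NeBot] (hl : l ≤ cocompact ℝ) (hsup : ApproachesSup (displacement f) l)
    (hbdd : BddAbove (range (displacement f))) :
    Periodic (displacement f) (⨆ x, displacement f x) := by
  intro x
  rw [displacement_add_eq_iff]
  have hlhs : Tendsto (fun z => f (x + displacement f (z + x))) l
      (𝓝 (f (x + ⨆ x, displacement f x))) :=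
    (f.continuous.tendsto _).comp ((hsup.tendsto_ciSup hbdd x).const_add x)
  refine tendsto_nhds_unique (hlhs.congr' ?_) ((hsup.tendsto_ciSup hbdd (f x)).const_add (f x))
  filter_upwards [hl hcomm.eventually_neg] with z hz
  simpa only [RelIso.mul_apply, conjShift_neg_apply] using DFunLike.congr_fun hz.eq x

lemma CommutesWithFarTranslates.displacement_eq_of_lt_apply (hcomm : CommutesWithFarTranslates f)
    (hf : ∀ x, x < f x) {D : Set ℝ} (hD : Dense D) (hdich : ShiftDichotomy D (displacement f))
    (x y : ℝ) : displacement f x = displacement f y := by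
  have hcont : Continuous (displacement f) := continuous_displacement f.continuous
  obtain hconst | ⟨l, _, hl, hsup⟩ := hdich.eq_or_exists_approachesSup hD hcont
  · exact hconst x y
  have hbdd := bddAbove_range_displacement hf hcomm hl hsup
  have hpos : 0 < ⨆ x, displacement f x := (sub_pos.mpr (hf 0)).trans_le (le_ciSup hbdd 0)
  exact hdich.eq_of_periodic hD hcont hpos.ne' (periodic_displacement_ciSup hcomm hl hsup hbdd) x y

lemma displacement_inv_add_eq_iff {x s : ℝ} :
    displacement (f⁻¹ : ℝ ≃o ℝ) (f x + s) = displacement (f⁻¹ : ℝ ≃o ℝ) (f x) ↔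
      displacement f (x + s) = displacement f x := by
  rw [displacement_add_eq_iff, displacement_add_eq_iff, RelIso.inv_apply_self,
    eq_comm (b := f x + s)]
  exact f.symm_apply_eq

lemma ShiftDichotomy.inv {D : Set ℝ} (hdich : ShiftDichotomy D (displacement f)) :
    ShiftDichotomy D (displacement (f⁻¹ : ℝ ≃o ℝ)) := by
  refine hdich.mono fun s hs hsD ⟨y, hy⟩ z => ?_
  obtain ⟨x, rfl⟩ := f.surjective y
  obtain ⟨w, rfl⟩ := f.surjective z
  exact displacement_inv_add_eq_iff.mpr
    (hs hsD ⟨x, displacement_inv_add_eq_iff.mp hy⟩ w)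

lemma CommutesWithFarTranslates.exists_eq_addRight (hcomm : CommutesWithFarTranslates f)
    (hf : (∀ x, x < f x) ∨ ∀ x, f x < x) {D : Set ℝ} (hD : Dense D)
    (hdich : ShiftDichotomy D (displacement f)) : ∃ t, f = OrderIso.addRight t := by
  have key {g : ℝ ≃o ℝ} (hcomm : CommutesWithFarTranslates g) (hg : ∀ x, x < g x)
      (hdich : ShiftDichotomy D (displacement g)) : ∃ t, g = OrderIso.addRight t := by
    refine ⟨displacement g 0, OrderIso.ext (funext fun x => ?_)⟩
    rw [← hcomm.displacement_eq_of_lt_apply hg hD hdich x 0]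
    exact (add_sub_cancel x (g x)).symm
  obtain hf | hf := hf
  · exact key hcomm hf hdich
  · obtain ⟨t, ht⟩ := key hcomm.inv (fun x => f.lt_symm_apply.mpr (hf x)) hdich.inv
    refine ⟨-t, ?_⟩
    rw [← inv_inv f, ht]
    ext x
    exact (sub_eq_add_neg x t)

lemma isFixedPt_mul_inv_conjShift_iff {x s : ℝ} :
    IsFixedPt (f * (conjShift s f)⁻¹ : ℝ ≃o ℝ) (f x + s) ↔ f (x + s) = f x + s := by
  have hinv : (conjShift s f)⁻¹ (f x + s) = x + s :=
    (conjShift s f).symm_apply_eq.mpr (by rw [conjShift_apply, add_sub_cancel_right])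
  rw [IsFixedPt, RelIso.mul_apply, hinv]

lemma eq_one_of_commute_of_isFixedPt (hf : (∀ x, x < f x) ∨ ∀ x, f x < x) {g : ℝ ≃o ℝ}
    (hg : CommutesWithFarTranslates g) (hgf : Commute g f) {x₀ : ℝ} (hx₀ : IsFixedPt g x₀) :
    g = 1 := by
  have hfix := (hg.eventually_isFixedPt hx₀).filter_mono atTop_le_cocompact
  obtain hf | hf := hf
  · exact eq_one_of_commute_of_eventually_isFixedPt hf hgf hfix
  · exact eq_one_of_commute_of_eventually_isFixedPt (fun x => f.lt_symm_apply.mpr (hf x))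
      hgf.inv_right hfix

lemma shiftDichotomy_displacement (hcomm : CommutesWithFarTranslates f)
    (hf : (∀ x, x < f x) ∨ ∀ x, f x < x) {D : Set ℝ}
    (hcommutator : ∀ s ∈ D, CommutesWithFarTranslates (f * (conjShift s f)⁻¹)) :
    ShiftDichotomy D (displacement f) := by
  filter_upwards [hcomm.filter_mono atTop_le_cocompact] with s hs hsD ⟨x, hx⟩ y
  have hg : Commute (f * (conjShift s f)⁻¹) f :=
    (Commute.refl f).mul_left hs.symm.inv_left
  rw [displacement_add_eq_iff, ← isFixedPt_mul_inv_conjShift_iff] at hx ⊢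
  rw [eq_one_of_commute_of_isFixedPt hf (hcommutator s hsD) hg hx]
  rfl

end FixedPointFree

theorem eventually_isFixedPt_or_exists_eq_addRight (hcomm : CommutesWithFarTranslates f)
    {D : Set ℝ} (hD : Dense D)
    (hcommutator : ∀ s ∈ D, CommutesWithFarTranslates (f * (conjShift s f)⁻¹)) :
    (∀ᶠ x in cocompact ℝ, IsFixedPt f x) ∨ ∃ t, f = OrderIso.addRight t := by
  by_cases hfix : ∃ x, IsFixedPt f x
  · obtain ⟨x₀, hx₀⟩ := hfix
    exact .inl (hcomm.eventually_isFixedPt hx₀)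
  have hf : (∀ x, x < f x) ∨ ∀ x, f x < x := by
    contrapose! hfix
    obtain ⟨⟨x, hx⟩, ⟨y, hy⟩⟩ := hfix
    exact intermediate_value_univ₂ f.continuous continuous_id hx hy
  exact .inr (hcomm.exists_eq_addRight hf hD (shiftDichotomy_displacement hcomm hf hcommutator))

end FarTranslates

/-! ### Homeomorphisms -/

section Homeomorphisms

lemma mul_homeomorph_apply {X : Type*} [TopologicalSpace X] (f g : X ≃ₜ X) (x : X) :
    (f * g) x = f (g x) := rfl

/-- There is a compact set `K` such that `h` commutes with its conjugates by the elements of `G`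
that move `K` off itself: the hypothesis made in (2) on `h` and on its commutators. -/
def CommutesOffCompact {X : Type*} [TopologicalSpace X] (G : Subgroup (X ≃ₜ X)) (h : X ≃ₜ X) :
    Prop :=
  ∃ K : Set X, IsCompact K ∧ ∀ u ∈ G, (u '' K) ∩ K = ∅ → Commute h (u * h * u⁻¹)

lemma isCompact_supp_iff {h : ℝ ≃ₜ ℝ} :
    IsCompact (Supp h) ↔ ∀ᶠ x in cocompact ℝ, IsFixedPt h x := by
  constructor
  · intro hc
    filter_upwards [hc.compl_mem_cocompact] with x hx
    by_contra hmoved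
    exact hx (subset_closure hmoved)
  · intro hfix
    obtain ⟨K, hK, hKfix⟩ := mem_cocompact.mp hfix
    exact hK.closure_of_subset fun x hx => by_contra fun hxK => hx (hKfix hxK)

section CompactlySupported

variable {X : Type*} [TopologicalSpace X] {h : X ≃ₜ X}

lemma commute_of_forall_isFixedPt_or {f g : X ≃ₜ X} (h : ∀ x, IsFixedPt f x ∨ IsFixedPt g x) :
    Commute f g :=
  Homeomorph.toEquiv_injective (Equiv.Perm.Disjoint.commute (f := f.toEquiv) (g := g.toEquiv) h)

lemma isFixedPt_conj {u : X ≃ₜ X} {x : X} (hx : IsFixedPt h (u⁻¹ x)) :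
    IsFixedPt (u * h * u⁻¹ : X ≃ₜ X) x := by
  rw [IsFixedPt, mul_homeomorph_apply, mul_homeomorph_apply, hx.eq]
  exact u.apply_symm_apply x

lemma commutesOffCompact_of_eventually_isFixedPt (hfix : ∀ᶠ x in cocompact X, IsFixedPt h x)
    (G : Subgroup (X ≃ₜ X)) : CommutesOffCompact G h := by
  obtain ⟨K, hK, hKfix⟩ := mem_cocompact.mp hfix
  refine ⟨K, hK, fun u _ hu => commute_of_forall_isFixedPt_or fun x => ?_⟩
  by_cases hx : x ∈ K
  · refine .inr (isFixedPt_conj (hKfix fun hux => ?_))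
    exact (eq_empty_iff_forall_notMem.mp hu x) ⟨⟨u⁻¹ x, hux, u.apply_symm_apply x⟩, hx⟩
  · exact .inl (hKfix hx)

lemma eventually_isFixedPt_mul_conj_inv (hfix : ∀ᶠ x in cocompact X, IsFixedPt h x)
    (γ : X ≃ₜ X) : ∀ᶠ x in cocompact X, IsFixedPt (h * γ * h⁻¹ * γ⁻¹ : X ≃ₜ X) x := by
  filter_upwards [hfix, γ⁻¹.isClosedEmbedding.tendsto_cocompact.eventually hfix] with x hx hγx
  have hinv : IsFixedPt (h⁻¹ : X ≃ₜ X) (γ⁻¹ x) := h.symm_apply_eq.mpr hγx.symm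
  rw [mul_assoc, mul_assoc, ← mul_assoc γ]
  exact hx.comp (isFixedPt_conj hinv)

end CompactlySupported

section Translations

lemma translation_inv_apply (t x : ℝ) : (translation t)⁻¹ x = x - t :=
  (sub_eq_add_neg x t).symm

lemma commute_conj_translation_iff {h : ℝ ≃ₜ ℝ} {t : ℝ} :
    Commute h (translation t * h * (translation t)⁻¹) ↔
      ∀ x, h (h (x - t) + t) = h (h x - t) + t := by
  simp only [← translation_inv_apply]
  exact ⟨fun hc => DFunLike.congr_fun hc.eq, fun hx => Homeomorph.ext hx⟩

/- The set of `t` for which the two maps commute is closed, and translations by `t ∉ K - K` move `K`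
off itself. -/
lemma CommutesOffCompact.eventually_commute {G : Subgroup (ℝ ≃ₜ ℝ)} {h : ℝ ≃ₜ ℝ}
    (hcomm : CommutesOffCompact G h) (hG : Dense {t | translation t ∈ G}) :
    ∀ᶠ t in cocompact ℝ, Commute h (translation t * h * (translation t)⁻¹) := by
  obtain ⟨K, hK, hKcomm⟩ := hcomm
  have hclosed : IsClosed {t | Commute h (translation t * h * (translation t)⁻¹)} := by
    simp only [commute_conj_translation_iff, ofPred_forall]
    exact isClosed_iInter fun x => isClosed_eq (by fun_prop) (by fun_prop)
  have hKK : IsCompact (K - K) := sub_eq_add_neg K K ▸ hK.add hK.neg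
  filter_upwards [hKK.compl_mem_cocompact] with t ht
  refine closure_minimal ?_ hclosed
    (hG.open_subset_closure_inter hKK.isClosed.isOpen_compl ht)
  rintro s ⟨hs, hsG⟩
  refine hKcomm _ hsG (eq_empty_iff_forall_notMem.mpr ?_)
  rintro _ ⟨⟨x, hx, rfl⟩, hxs⟩
  exact hs ⟨_, hxs, x, hx, add_sub_cancel_left x s⟩

lemma eq_of_isFixedPt_of_antitone {α : Type*} [LinearOrder α] {f : α → α} (hf : Antitone f)
    {x y : α} (hx : IsFixedPt f x) (hy : IsFixedPt f y) : x = y := by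
  wlog hxy : x ≤ y generalizing x y
  · exact (this hy hx (le_of_not_ge hxy)).symm
  · exact hxy.antisymm (hy.ge.trans ((hf hxy).trans hx.le))

lemma not_strictAnti_of_commute_conj_translation {h : ℝ ≃ₜ ℝ} {t : ℝ} (ht : t ≠ 0)
    (hcomm : Commute h (translation t * h * (translation t)⁻¹)) : ¬ StrictAnti h := by
  intro hanti
  obtain ⟨p, hp⟩ : ∃ p, IsFixedPt h p := by
    obtain h0 | h0 := le_total 0 (h 0)
    · exact intermediate_value_univ₂ h.continuous continuous_id (hanti.antitone h0) h0
    · exact intermediate_value_univ₂ h.continuous continuous_id h0 (hanti.antitone h0)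
  have hq : IsFixedPt h (h (p + t) - t) := by
    have hpt := commute_conj_translation_iff.mp hcomm (p + t)
    rw [add_sub_cancel_right, hp.eq] at hpt
    exact eq_sub_of_add_eq hpt.symm
  have hpt : IsFixedPt h (p + t) :=
    eq_add_of_sub_eq (eq_of_isFixedPt_of_antitone hanti.antitone hq hp)
  exact ht (add_eq_left.mp (eq_of_isFixedPt_of_antitone hanti.antitone hpt hp))

end Translations

/-- Order automorphisms as homeomorphisms; being a homomorphism, it carries commutation relations
from one group to the other. -/
def homeomorphOfOrderIso (α : Type*) [LinearOrder α] [TopologicalSpace α] [OrderTopology α] :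
    (α ≃o α) →* (α ≃ₜ α) where
  toFun f := f.toHomeomorph
  map_one' := rfl
  map_mul' _ _ := rfl

lemma homeomorphOfOrderIso_injective (α : Type*) [LinearOrder α] [TopologicalSpace α]
    [OrderTopology α] : Injective (homeomorphOfOrderIso α) := fun _ _ hfg =>
  OrderIso.ext (funext fun x => DFunLike.congr_fun hfg x)

lemma homeomorphOfOrderIso_conjShift (t : ℝ) (f : ℝ ≃o ℝ) :
    homeomorphOfOrderIso ℝ (conjShift t f) =
      translation t * homeomorphOfOrderIso ℝ f * (translation t)⁻¹ := rfl

lemma CommutesOffCompact.commutesWithFarTranslates {G : Subgroup (ℝ ≃ₜ ℝ)} {f : ℝ ≃o ℝ}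
    (hcomm : CommutesOffCompact G (homeomorphOfOrderIso ℝ f))
    (hG : Dense {t | translation t ∈ G}) : CommutesWithFarTranslates f :=
  (hcomm.eventually_commute hG).mono fun _ ht =>
    ht.of_map (homeomorphOfOrderIso_injective ℝ)

lemma CommutesOffCompact.exists_orderIso {G : Subgroup (ℝ ≃ₜ ℝ)} {h : ℝ ≃ₜ ℝ}
    (hcomm : CommutesOffCompact G h) (hG : Dense {t | translation t ∈ G}) :
    ∃ f, homeomorphOfOrderIso ℝ f = h := by
  obtain ⟨t, ht, ht0⟩ := ((hcomm.eventually_commute hG).and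
    (isCompact_singleton (x := (0 : ℝ))).compl_mem_cocompact).exists
  have hmono : StrictMono h := (h.continuous.strictMono_of_inj h.injective).resolve_right
    (not_strictAnti_of_commute_conj_translation ht0 ht)
  exact ⟨hmono.orderIsoOfSurjective h h.surjective, Homeomorph.ext fun _ => rfl⟩

theorem compact_support_iff_commutation_general (G : Subgroup (ℝ ≃ₜ ℝ))
    (hG : Dense {t | translation t ∈ G}) (h : ℝ ≃ₜ ℝ) (hnt : ¬ ∃ t : ℝ, ∀ x : ℝ, h x = x + t) :
    IsCompact (Supp h) ↔
      CommutesOffCompact G h ∧ ∀ γ ∈ G, CommutesOffCompact G (h * γ * h⁻¹ * γ⁻¹) := by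
  rw [isCompact_supp_iff]
  constructor
  · exact fun hfix => ⟨commutesOffCompact_of_eventually_isFixedPt hfix G, fun γ _ =>
      commutesOffCompact_of_eventually_isFixedPt (eventually_isFixedPt_mul_conj_inv hfix γ) G⟩
  · rintro ⟨hcomm, hcommutator⟩
    obtain ⟨f, rfl⟩ := hcomm.exists_orderIso hG
    refine (eventually_isFixedPt_or_exists_eq_addRight (hcomm.commutesWithFarTranslates hG) hG
      fun t ht => ?_).resolve_right ?_
    · refine CommutesOffCompact.commutesWithFarTranslates ?_ hG
      rw [map_mul, map_inv, homeomorphOfOrderIso_conjShift]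
      simpa only [mul_inv_rev, inv_inv, mul_assoc] using hcommutator _ ht
    · rintro ⟨t, rfl⟩
      exact hnt ⟨t, fun _ => rfl⟩

/-- The one-parameter group of translations, for pulling subgroups of `ℝ ≃ₜ ℝ` back to `ℝ`. -/
noncomputable def translationHom : Multiplicative ℝ →* (ℝ ≃ₜ ℝ) where
  toFun t := translation t.toAdd
  map_one' := Homeomorph.ext add_zero
  map_mul' s t := Homeomorph.ext fun x => by
    rw [toAdd_mul, add_comm]
    exact (add_assoc x _ _).symm

lemma inv_dilation_mul_translation_mul_dilation (n : ℕ) (hn : 2 ≤ n) (t : ℝ) :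
    (dilation n hn)⁻¹ * translation t * dilation n hn = translation ((n : ℝ)⁻¹ * t) :=
  Homeomorph.ext fun x => (dilation n hn).symm_apply_eq.mpr <| by
    have hn0 : (n : ℝ) ≠ 0 := by positivity
    change (n : ℝ) * x + t = n * (x + (n : ℝ)⁻¹ * t)
    field_simp

lemma dense_setOf_translation_mem_BSgroup (n : ℕ) (hn : 2 ≤ n) :
    Dense {t | translation t ∈ BSgroup n hn} := by
  have hpow (k : ℕ) : translation ((n : ℝ)⁻¹ ^ k) ∈ BSgroup n hn := by
    induction k with
    | zero => exact Subgroup.subset_closure (by simp)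
    | succ k ih =>
      have hd : dilation n hn ∈ BSgroup n hn := Subgroup.subset_closure (mem_insert _ _)
      rw [pow_succ', ← inv_dilation_mul_translation_mul_dilation n hn]
      exact mul_mem (mul_mem (inv_mem hd) ih) hd
  refine ((BSgroup n hn).comap translationHom).toAddSubgroup'.dense_of_not_isolated_zero
    fun ε hε => ?_
  have hn1 : (1 : ℝ) < n := by exact_mod_cast hn
  obtain ⟨k, hk⟩ := exists_pow_lt_of_lt_one hε (inv_lt_one_of_one_lt₀ hn1)
  exact ⟨_, hpow k, pow_pos (inv_pos.mpr (zero_lt_one.trans hn1)) k, hk⟩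

end Homeomorphisms

theorem compact_support_iff_commutation
    (n : ℕ) (hn : 2 ≤ n) (h : ℝ ≃ₜ ℝ) (hhmono : StrictMono h)
    (hnt : ¬ ∃ t : ℝ, ∀ x : ℝ, h x = x + t) :
    IsCompact (Supp h) ↔
      ((∃ K : Set ℝ, IsCompact K ∧
          ∀ u ∈ BSgroup n hn, (u '' K) ∩ K = ∅ → Commute h (u * h * u⁻¹)) ∧
        ∀ γ ∈ BSgroup n hn, ∃ K' : Set ℝ, IsCompact K' ∧
          ∀ u ∈ BSgroup n hn, (u '' K') ∩ K' = ∅ →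
            Commute (h * γ * h⁻¹ * γ⁻¹) (u * (h * γ * h⁻¹ * γ⁻¹) * u⁻¹)) :=
  compact_support_iff_commutation_general _ (dense_setOf_translation_mem_BSgroup n hn) h hnt
end

section
/- Fix an integer n ≥ 2, a real number α ∈ (0,1], and a real number μ > 0 such that log μ / log n is irrational. Let Γ_A be the subgroup of Homeo₊(ℝ) generated by a(x) = n·x, b(x) = x + 1, and m(x) = μ·x. Let φ be a group homomorphism from Γ_A into the group of self-homeomorphisms of [0,1] such that for every γ ∈ Γ_A, φ(γ) is an orientation-preserving C^{1+α} diffeomorphism of [0,1]. Suppose there exists a homeomorphism f from the open interval (0,1) onto ℝ such that f(φ(γ)(x)) = γ(f(x)) for every γ ∈ Γ_A and every x ∈ (0,1). Then f is of class C^{1+α} on (0,1): f is continuously differentiable on (0,1) with nowhere-vanishing derivative, and the derivative of f is α-Hölder continuous on a neighborhood of every point of (0,1). -/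
open Set Topology

/-- The homeomorphism `x ↦ μ·x` of `ℝ`. -/
noncomputable def homothety (μ : ℝ) (hμ : μ ≠ 0) : ℝ ≃ₜ ℝ := Homeomorph.mulLeft₀ μ hμ

/-- The affine group `Γ_A` generated by `x ↦ n·x`, `x ↦ x + 1` and `x ↦ μ·x`. -/
noncomputable def GammaA (n : ℕ) (hn : 2 ≤ n) (μ : ℝ) (hμ : μ ≠ 0) :
    Subgroup (ℝ ≃ₜ ℝ) :=
  Subgroup.closure {dilation n hn, translation 1, homothety μ hμ}

/-- The closed unit interval `[0,1]` as a subset of `ℝ`. -/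
abbrev unitI : Set ℝ := Set.Icc 0 1

/-- A self-homeomorphism of `[0,1]`, as a self-map of `ℝ` (extended by the identity). -/
noncomputable def asMap (g : ↥unitI ≃ₜ ↥unitI) : ℝ → ℝ :=
  fun x => if hx : x ∈ unitI then (g ⟨x, hx⟩ : ℝ) else x

/-- `g` is an orientation-preserving `C^{1+α}` diffeomorphism of `[0,1]`: it is strictly
increasing, continuously differentiable on `[0,1]` with nowhere-vanishing derivative,
and its derivative is `α`-Hölder continuous on `[0,1]`. -/
def IsOPC1HolderDiffeo (α : ℝ) (g : ↥unitI ≃ₜ ↥unitI) : Prop :=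
  StrictMonoOn (asMap g) unitI ∧
  ∃ g' : ℝ → ℝ,
    (∀ x ∈ unitI, HasDerivWithinAt (asMap g) (g' x) unitI x) ∧
    ContinuousOn g' unitI ∧
    (∀ x ∈ unitI, g' x ≠ 0) ∧
    ∃ C : ℝ, 0 ≤ C ∧ ∀ x ∈ unitI, ∀ y ∈ unitI, |g' x - g' y| ≤ C * |x - y| ^ α

/-! Write `u` for the inverse of `f` and `c` for the dilation factor; the diffeomorphism attached to
`γ` sends `u t` to `u (γ t)`. The crux is that the fixed point `u 0` of the diffeomorphism attached
to the contraction `t ↦ t / c` is hyperbolic. In the coordinate `-1 / log x` near an end of `(0,1)`,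
every diffeomorphism is asymptotically an isometry. So the `2 ^ k` images of a short interval under
words of length `k` in `t ↦ c t` and `t ↦ c t + 1`, which do not overlap and stay close to that end,
have total length at least `(2 - ε) ^ k` times the original one. As the total length is bounded, the
intervals `u [N, N + c ^ (-k)]`, and with them `u [0, c ^ (-k)]`, shrink exponentially, and the
multiplier at `u 0` is `< 1`.

By Sternberg's theorem the contraction is then linearized on `(0,1)` by a `C^{1+α}` map `H`. The
homothety commutes with the contraction, so `H` linearizes it too, and `s ↦ log |H (u (exp s))|`
is a continuous function with two incommensurable quasi-periods, hence affine. Thus `f` is a power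
of `|H|` up to a constant where `f > 0`, and translations carry the regularity everywhere. -/

open Filter
open scoped NNReal ENNReal

/-! ### Local Hölder regularity -/

section LocallyHolder

variable {X Y Z : Type*}

lemma holderOnWith_iff_dist_le [PseudoMetricSpace X] [PseudoMetricSpace Y] {C r : ℝ≥0}
    {f : X → Y} {s : Set X} :
    HolderOnWith C r f s ↔ ∀ x ∈ s, ∀ y ∈ s, dist (f x) (f y) ≤ C * dist x y ^ (r : ℝ) := by
  refine ⟨fun h x hx y hy => h.dist_le hx hy, fun h x hx y hy => ?_⟩
  have hxy : nndist (f x) (f y) ≤ C * nndist x y ^ (r : ℝ) := by exact_mod_cast h x hx y hy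
  rw [edist_nndist, edist_nndist, ← ENNReal.coe_rpow_of_nonneg _ r.coe_nonneg]
  exact_mod_cast hxy

/-- `f` is `r`-Hölder on some neighbourhood of `x`. -/
def LocallyHolderAt [PseudoMetricSpace X] [PseudoMetricSpace Y] (r : ℝ≥0) (f : X → Y) (x : X) :
    Prop :=
  ∃ C : ℝ≥0, ∃ s ∈ 𝓝 x, HolderOnWith C r f s

namespace LocallyHolderAt

section Metric

variable [PseudoMetricSpace X] [PseudoMetricSpace Y] [PseudoMetricSpace Z]
  {r r' : ℝ≥0} {f f' : X → Y} {g : Y → Z} {x : X}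

lemma congr (hf : LocallyHolderAt r f x) (h : f =ᶠ[𝓝 x] f') : LocallyHolderAt r f' x := by
  obtain ⟨C, s, hs, hfs⟩ := hf
  refine ⟨C, s ∩ {y | f y = f' y}, inter_mem hs h, fun y hy z hz => ?_⟩
  rw [← hy.2, ← hz.2]
  exact hfs y hy.1 z hz.1

lemma continuousAt (hf : LocallyHolderAt r f x) (hr : 0 < r) : ContinuousAt f x := by
  obtain ⟨C, s, hs, hfs⟩ := hf
  exact (hfs.continuousOn hr).continuousAt hs

lemma mono (hf : LocallyHolderAt r f x) (hr : r' ≤ r) : LocallyHolderAt r' f x := by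
  obtain ⟨C, s, hs, hfs⟩ := hf
  refine ⟨_, s ∩ Metric.ball x 1, inter_mem hs (Metric.ball_mem_nhds x one_pos),
    (hfs.mono inter_subset_left).of_le (D := 2) (fun y hy z hz => ?_) hr⟩
  rw [edist_nndist, ENNReal.coe_le_coe, ← NNReal.coe_le_coe, coe_nndist]
  calc dist y z ≤ dist y x + dist z x := dist_triangle_right y z x
    _ ≤ 1 + 1 := add_le_add hy.2.le hz.2.le
    _ = (2 : ℝ≥0) := by norm_num

lemma comp (hg : LocallyHolderAt r' g (f x)) (hf : LocallyHolderAt r f x)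
    (hfx : ContinuousAt f x) : LocallyHolderAt (r' * r) (g ∘ f) x := by
  obtain ⟨C', t, ht, hgt⟩ := hg
  obtain ⟨C, s, hs, hfs⟩ := hf
  exact ⟨_, s ∩ f ⁻¹' t, inter_mem hs (hfx ht),
    hgt.comp (hfs.mono inter_subset_left) fun _ hy => hy.2⟩

lemma prodMk {g : X → Z} (hf : LocallyHolderAt r f x) (hg : LocallyHolderAt r g x) :
    LocallyHolderAt r (fun y => (f y, g y)) x := by
  obtain ⟨C, s, hs, hfs⟩ := hf
  obtain ⟨C', t, ht, hgt⟩ := hg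
  refine ⟨max C C', s ∩ t, inter_mem hs ht, fun y hy z hz => ?_⟩
  exact max_le ((hfs.mono_const (le_max_left C C')) y hy.1 z hz.1)
    ((hgt.mono_const (le_max_right C C')) y hy.2 z hz.2)

end Metric

section Normed

variable {E F : Type*} [NormedAddCommGroup E] [NormedSpace ℝ E] [NormedAddCommGroup F]
  [NormedSpace ℝ F] {r : ℝ≥0}

lemma of_hasStrictFDerivAt {f : E → F} {f' : E →L[ℝ] F} {x : E} (hf : HasStrictFDerivAt f f' x) :
    LocallyHolderAt 1 f x := by
  obtain ⟨K, s, hs, hfs⟩ := hf.exists_lipschitzOnWith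
  exact ⟨K, s, hs, holderOnWith_one.2 hfs⟩

lemma contDiffAt_comp [PseudoMetricSpace X] {f : X → E} {g : E → F} {x : X}
    (hg : ContDiffAt ℝ 1 g (f x)) (hf : LocallyHolderAt r f x) (hr : 0 < r) :
    LocallyHolderAt r (g ∘ f) x := by
  have h := (of_hasStrictFDerivAt (hg.hasStrictFDerivAt one_ne_zero)).comp hf (hf.continuousAt hr)
  rwa [one_mul] at h

lemma comp_hasStrictDerivAt [PseudoMetricSpace X] {f : ℝ → ℝ} {g : ℝ → X} {f' x : ℝ}
    (hg : LocallyHolderAt r g (f x)) (hf : HasStrictDerivAt f f' x) :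
    LocallyHolderAt r (g ∘ f) x := by
  have h := hg.comp (of_hasStrictFDerivAt hf.hasStrictFDerivAt) hf.hasDerivAt.continuousAt
  rwa [mul_one] at h

lemma add [PseudoMetricSpace X] {f g : X → F} {x : X} (hf : LocallyHolderAt r f x)
    (hg : LocallyHolderAt r g x) (hr : 0 < r) : LocallyHolderAt r (fun y => f y + g y) x :=
  contDiffAt_comp (g := fun v : F × F => v.1 + v.2) contDiff_add.contDiffAt (hf.prodMk hg) hr

lemma mul [PseudoMetricSpace X] {f g : X → ℝ} {x : X} (hf : LocallyHolderAt r f x)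
    (hg : LocallyHolderAt r g x) (hr : 0 < r) : LocallyHolderAt r (fun y => f y * g y) x :=
  contDiffAt_comp (g := fun v : ℝ × ℝ => v.1 * v.2) contDiff_mul.contDiffAt (hf.prodMk hg) hr

end Normed

end LocallyHolderAt

end LocallyHolder

/-- `f` is a `C^{1+α}` diffeomorphism germ at `x`: it is differentiable near `x` with
`deriv f x ≠ 0`, and `deriv f` is `α`-Hölder near `x`. -/
structure IsC1HolderDiffeoAt (α : ℝ≥0) (f : ℝ → ℝ) (x : ℝ) : Prop where
  eventually_differentiableAt : ∀ᶠ y in 𝓝 x, DifferentiableAt ℝ f y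
  deriv_ne_zero : deriv f x ≠ 0
  locallyHolderAt_deriv : LocallyHolderAt α (deriv f) x

namespace IsC1HolderDiffeoAt

variable {α : ℝ≥0} {f g : ℝ → ℝ} {x : ℝ}

lemma hasDerivAt (hf : IsC1HolderDiffeoAt α f x) : HasDerivAt f (deriv f x) x :=
  hf.eventually_differentiableAt.self_of_nhds.hasDerivAt

lemma continuousAt (hf : IsC1HolderDiffeoAt α f x) : ContinuousAt f x :=
  hf.hasDerivAt.continuousAt

lemma hasStrictDerivAt (hf : IsC1HolderDiffeoAt α f x) (hα : 0 < α) :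
    HasStrictDerivAt f (deriv f x) x :=
  hasStrictDerivAt_of_hasDerivAt_of_continuousAt
    (hf.eventually_differentiableAt.mono fun _ hy => hy.hasDerivAt)
    (hf.locallyHolderAt_deriv.continuousAt hα)

lemma of_hasDerivAt {f' : ℝ → ℝ} (hf : ∀ᶠ y in 𝓝 x, HasDerivAt f (f' y) y) (hx : f' x ≠ 0)
    (hf' : LocallyHolderAt α f' x) : IsC1HolderDiffeoAt α f x where
  eventually_differentiableAt := hf.mono fun _ hy => hy.differentiableAt
  deriv_ne_zero := by rwa [hf.self_of_nhds.deriv]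
  locallyHolderAt_deriv := hf'.congr (hf.mono fun _ hy => hy.deriv.symm)

lemma congr (hf : IsC1HolderDiffeoAt α f x) (h : f =ᶠ[𝓝 x] g) : IsC1HolderDiffeoAt α g x :=
  of_hasDerivAt (h.eventuallyEq_nhds.mp (hf.eventually_differentiableAt.mono
    fun _ hd hfg => hd.hasDerivAt.congr_of_eventuallyEq hfg.symm))
    hf.deriv_ne_zero hf.locallyHolderAt_deriv

lemma comp (hg : IsC1HolderDiffeoAt α g (f x)) (hf : IsC1HolderDiffeoAt α f x) (hα : 0 < α) :
    IsC1HolderDiffeoAt α (g ∘ f) x :=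
  of_hasDerivAt ((hf.continuousAt.eventually hg.eventually_differentiableAt).mp
      (hf.eventually_differentiableAt.mono fun y hfy hgy => hgy.hasDerivAt.comp y hfy.hasDerivAt))
    (mul_ne_zero hg.deriv_ne_zero hf.deriv_ne_zero)
    ((hg.locallyHolderAt_deriv.comp_hasStrictDerivAt (hf.hasStrictDerivAt hα)).mul
      hf.locallyHolderAt_deriv hα)

lemma of_contDiffAt (hα : α ≤ 1) (hf : ContDiffAt ℝ 2 f x) (hx : deriv f x ≠ 0) :
    IsC1HolderDiffeoAt α f x where
  eventually_differentiableAt := by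
    filter_upwards [hf.eventually (by simp)] with y hy using hy.differentiableAt two_ne_zero
  deriv_ne_zero := hx
  locallyHolderAt_deriv := by
    have hf' : ContDiffAt ℝ 1 (deriv f) x := hf.derivWithin (by norm_num)
    exact (LocallyHolderAt.of_hasStrictFDerivAt (hf'.hasStrictFDerivAt one_ne_zero)).mono hα

lemma exists_hasDerivWithinAt {s : Set ℝ} (hα : 0 < α)
    (hf : ∀ x ∈ s, IsC1HolderDiffeoAt α f x) :
    ∃ f' : ℝ → ℝ, (∀ x ∈ s, HasDerivWithinAt f (f' x) s x) ∧ (∀ x ∈ s, f' x ≠ 0) ∧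
      ContinuousOn f' s ∧ ∀ x ∈ s, ∃ ε > (0 : ℝ), ∃ C : ℝ, ∀ y ∈ s, ∀ z ∈ s,
        |y - x| < ε → |z - x| < ε → |f' y - f' z| ≤ C * |y - z| ^ (α : ℝ) := by
  refine ⟨deriv f, fun x hx => (hf x hx).hasDerivAt.hasDerivWithinAt,
    fun x hx => (hf x hx).deriv_ne_zero,
    fun x hx => ((hf x hx).locallyHolderAt_deriv.continuousAt hα).continuousWithinAt,
    fun x hx => ?_⟩
  obtain ⟨C, t, ht, hft⟩ := (hf x hx).locallyHolderAt_deriv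
  obtain ⟨ε, hε, hεt⟩ := Metric.mem_nhds_iff.1 ht
  exact ⟨ε, hε, C, fun y _ z _ hy hz => hft.dist_le (hεt hy) (hεt hz)⟩

end IsC1HolderDiffeoAt

/-! ### Hyperbolicity of the contracted fixed point -/

/-- The coordinate `-1 / log x` near `0⁺`. In this coordinate every `C¹` germ `x ↦ d x + o(x)` with
`d > 0` has derivative tending to `1`, whatever `d` is. -/
noncomputable def negInvLog (x : ℝ) : ℝ := -(Real.log x)⁻¹

lemma hasDerivAt_negInvLog {x : ℝ} (hx : x ∈ Ioo (0 : ℝ) 1) :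
    HasDerivAt negInvLog (x⁻¹ / Real.log x ^ 2) x := by
  have h := ((Real.hasDerivAt_log hx.1.ne').inv (Real.log_neg hx.1 hx.2).ne).neg
  rwa [neg_div, neg_neg] at h

lemma strictMonoOn_negInvLog : StrictMonoOn negInvLog (Ioo 0 1) := fun _ hx _ hy hxy =>
  neg_lt_neg ((inv_lt_inv_of_neg (Real.log_neg hy.1 hy.2) (Real.log_neg hx.1 hx.2)).2
    (Real.log_lt_log hx.1 hxy))

lemma negInvLog_pos {x : ℝ} (hx : x ∈ Ioo (0 : ℝ) 1) : 0 < negInvLog x :=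
  neg_pos.2 (inv_lt_zero.2 (Real.log_neg hx.1 hx.2))

lemma tendsto_log_div_log_nhdsGT_zero {G : ℝ → ℝ} {d : ℝ} (hd : 0 < d)
    (hG : Tendsto (fun x => G x / x) (𝓝[>] 0) (𝓝 d)) :
    Tendsto (fun x => Real.log (G x) / Real.log x) (𝓝[>] 0) (𝓝 1) := by
  have h : Tendsto (fun x => Real.log (G x / x) * (Real.log x)⁻¹ + 1) (𝓝[>] 0)
      (𝓝 (Real.log d * 0 + 1)) :=
    ((hG.log hd.ne').mul Real.tendsto_log_nhdsGT_zero.inv_tendsto_atBot).add_const 1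
  rw [mul_zero, zero_add] at h
  refine h.congr' ?_
  filter_upwards [hG.eventually_const_lt hd, Ioo_mem_nhdsGT one_pos] with x hGx hx
  have hGx0 : G x ≠ 0 := fun h0 => by simp [h0] at hGx
  have hlog : Real.log x ≠ 0 := (Real.log_neg hx.1 hx.2).ne
  rw [Real.log_div hGx0 hx.1.ne']
  field_simp
  ring

/-- In the coordinate `negInvLog`, the germ of `G` at `0⁺` shrinks distances by a factor
arbitrarily close to `1` at worst. -/
def IsAlmostExpandingAtZero (G : ℝ → ℝ) : Prop :=
  ∀ η < 1, ∃ δ > 0, MonotoneOn (fun x => negInvLog (G x) - η * negInvLog x) (Ioo 0 δ)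

lemma isAlmostExpandingAtZero_of_tendsto_deriv {G : ℝ → ℝ} {d : ℝ} (hd : 0 < d)
    (hG : Tendsto G (𝓝[>] 0) (𝓝 0)) (hdiff : ∀ᶠ x in 𝓝[>] 0, DifferentiableAt ℝ G x)
    (hG' : Tendsto (deriv G) (𝓝[>] 0) (𝓝 d)) : IsAlmostExpandingAtZero G := by
  intro η hη
  have hratio : Tendsto (fun x => G x / x) (𝓝[>] 0) (𝓝 d) :=
    HasDerivAt.lhopital_zero_nhdsGT (hdiff.mono fun x hx => hx.hasDerivAt)
      (Eventually.of_forall hasDerivAt_id) (by simp) hG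
      (tendsto_id.mono_left nhdsWithin_le_nhds) (by simpa using hG')
  have hderiv_ratio : Tendsto
      (fun x => (G x / x)⁻¹ * deriv G x * ((Real.log (G x) / Real.log x)⁻¹) ^ 2)
      (𝓝[>] 0) (𝓝 1) := by
    have h := ((hratio.inv₀ hd.ne').mul hG').mul
      (((tendsto_log_div_log_nhdsGT_zero hd hratio).inv₀ one_ne_zero).pow 2)
    rwa [inv_mul_cancel₀ hd.ne', inv_one, one_pow, one_mul] at h
  obtain ⟨δ, hδ, hsub⟩ := mem_nhdsGT_iff_exists_Ioo_subset.1
    ((hderiv_ratio.eventually_const_lt hη).and (hdiff.and ((hratio.eventually_const_lt hd).and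
      ((hG.eventually_lt_const one_pos).and (Ioo_mem_nhdsGT one_pos)))))
  have hder : ∀ x ∈ Ioo 0 δ, HasDerivAt (fun x => negInvLog (G x) - η * negInvLog x)
      ((G x)⁻¹ / Real.log (G x) ^ 2 * deriv G x - η * (x⁻¹ / Real.log x ^ 2)) x := by
    intro x hx
    obtain ⟨-, hGx, hGpos, hG1, hx1⟩ := hsub hx
    have hGx01 : G x ∈ Ioo (0 : ℝ) 1 := ⟨by simpa [hx.1] using hGpos, hG1⟩
    exact ((hasDerivAt_negInvLog hGx01).comp x hGx.hasDerivAt).sub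
      ((hasDerivAt_negInvLog hx1).const_mul η)
  refine ⟨δ, hδ, monotoneOn_of_hasDerivWithinAt_nonneg (convex_Ioo 0 δ)
    (fun x hx => (hder x hx).continuousAt.continuousWithinAt)
    (fun x hx => (hder x (interior_subset hx)).hasDerivWithinAt) fun x hx => ?_⟩
  obtain ⟨hηx, -, -, -, hx1⟩ := hsub (interior_subset hx)
  have hw : 0 ≤ x⁻¹ / Real.log x ^ 2 := div_nonneg (inv_nonneg.2 hx1.1.le) (sq_nonneg _)
  calc 0 ≤ x⁻¹ / Real.log x ^ 2 *
        ((G x / x)⁻¹ * deriv G x * ((Real.log (G x) / Real.log x)⁻¹) ^ 2 - η) :=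
      mul_nonneg hw (sub_nonneg.2 hηx.le)
    _ = (G x)⁻¹ / Real.log (G x) ^ 2 * deriv G x - η * (x⁻¹ / Real.log x ^ 2) := by
      have := hx1.1.ne'
      have := (Real.log_neg hx1.1 hx1.2).ne
      field_simp

/-- The `2 ^ k` compositions of `s ↦ c * s` and `s ↦ c * s + 1` send `[s, s + h]` to
non-overlapping subintervals of `[c ^ k * s, c ^ k * (s + 1)]`, which is why the factor exceeds
`1` for `η` close to `1`. -/
lemma pow_mul_sub_le_of_antitoneOn {W : ℝ → ℝ} {c N η : ℝ} (hc : 2 ≤ c) (hN : 0 ≤ N) (hη : 0 ≤ η)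
    (hW : AntitoneOn W (Ici N)) (hscale : AntitoneOn (fun s => W (c * s) - η * W s) (Ici N))
    (hshift : AntitoneOn (fun s => W (s + 1) - η * W s) (Ici N)) (k : ℕ) :
    ∀ s ≥ N, ∀ h ≥ 0, c ^ k * h ≤ 1 →
      (η * (1 + η)) ^ k * (W s - W (s + h)) ≤ W (c ^ k * s) - W (c ^ k * (s + 1)) := by
  induction k with
  | zero =>
    intro s hs h hh hh1
    simp only [pow_zero, one_mul] at hh1 ⊢
    have := hW (mem_Ici.2 (by linarith)) (mem_Ici.2 (by linarith)) (add_le_add_right hh1 s)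
    linarith
  | succ k ih =>
    intro s hs h hh hh1
    have hs' : N ≤ c * s := by nlinarith
    have hch : 0 ≤ c * h := by positivity
    have hk : c ^ k * (c * h) ≤ 1 := by rwa [← mul_assoc, ← pow_succ]
    have hscale_s : η * (W s - W (s + h)) ≤ W (c * s) - W (c * s + c * h) := by
      have := hscale hs (mem_Ici.2 (by linarith)) (le_add_of_nonneg_right hh : s ≤ s + h)
      simp only [mul_add] at this
      linarith
    have hshift_s : η * (W (c * s) - W (c * s + c * h)) ≤
        W (c * s + 1) - W (c * s + 1 + c * h) := by
      have := hshift hs' (mem_Ici.2 (by linarith)) (le_add_of_nonneg_right hch)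
      simp only [add_right_comm _ (c * h)] at this
      linarith
    have hmono : W (c ^ (k + 1) * (s + 1)) ≤ W (c ^ k * (c * s + 1 + 1)) := by
      have hck : 1 ≤ c ^ k := one_le_pow₀ (by linarith)
      have hle : c * s + 1 + 1 ≤ c * (s + 1) := by linarith
      rw [pow_succ, mul_assoc]
      exact hW (mem_Ici.2 (by nlinarith)) (mem_Ici.2 (by nlinarith)) (by gcongr)
    calc (η * (1 + η)) ^ (k + 1) * (W s - W (s + h))
        = (η * (1 + η)) ^ k * ((1 + η) * (η * (W s - W (s + h)))) := by ring
      _ ≤ (η * (1 + η)) ^ k * ((1 + η) * (W (c * s) - W (c * s + c * h))) := by gcongr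
      _ ≤ (η * (1 + η)) ^ k * ((W (c * s) - W (c * s + c * h)) +
            (W (c * s + 1) - W (c * s + 1 + c * h))) := by gcongr; linarith
      _ ≤ (W (c ^ k * (c * s)) - W (c ^ k * (c * s + 1))) +
            (W (c ^ k * (c * s + 1)) - W (c ^ k * (c * s + 1 + 1))) := by
        rw [mul_add]
        exact add_le_add (ih _ hs' _ hch hk) (ih _ (by linarith) _ hch hk)
      _ ≤ W (c ^ (k + 1) * s) - W (c ^ (k + 1) * (s + 1)) := by
        rw [pow_succ, mul_assoc] at hmono ⊢
        rw [mul_assoc]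
        linarith

lemma le_inv_of_tendsto_ratio {D : ℕ → ℝ} {q M l : ℝ} (hq : 0 < q) (hD : ∀ k, 0 < D k)
    (hqD : ∀ k, q ^ k * D k ≤ M) (hl : Tendsto (fun k => D (k + 1) / D k) atTop (𝓝 l)) :
    l ≤ q⁻¹ := by
  by_contra! hlt
  obtain ⟨r, hqr, hrl⟩ := exists_between hlt
  have hr : 0 < r := (inv_pos.2 hq).trans hqr
  have hqr1 : (q * r)⁻¹ < 1 := by
    rw [mul_inv]
    rwa [← div_eq_mul_inv, div_lt_one hr]
  have hsum : Summable fun k => D k / r ^ k := by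
    refine Summable.of_nonneg_of_le (fun k => (div_pos (hD k) (pow_pos hr k)).le) (fun k => ?_)
      ((summable_geometric_of_lt_one (by positivity) hqr1).mul_left M)
    calc D k / r ^ k = q ^ k * D k * (q * r)⁻¹ ^ k := by
          rw [inv_pow, mul_pow]; field_simp
      _ ≤ M * (q * r)⁻¹ ^ k := by gcongr; exact hqD k
  refine not_summable_of_ratio_test_tendsto_gt_one ((one_lt_div hr).2 hrl)
    ((hl.div_const r).congr fun k => ?_) hsum
  rw [Real.norm_of_nonneg (div_pos (hD _) (pow_pos hr _)).le,
    Real.norm_of_nonneg (div_pos (hD _) (pow_pos hr _)).le, pow_succ]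
  have := (hD k).ne'
  field_simp

lemma tendsto_sub_div_sub_of_hasDerivAt {Φ g : ℝ → ℝ} {Φ' l x : ℝ} (hΦ : HasDerivAt Φ Φ' x)
    (hΦ' : Φ' ≠ 0) (hg : HasDerivAt g l x) (hgx : g x = x) :
    Tendsto (fun y => (Φ (g y) - Φ x) / (Φ y - Φ x)) (𝓝[≠] x) (𝓝 l) := by
  have hΦg : HasDerivAt (Φ ∘ g) (Φ' * l) x := HasDerivAt.comp x (by rwa [hgx]) hg
  have h := (hasDerivAt_iff_tendsto_slope.1 hΦg).div (hasDerivAt_iff_tendsto_slope.1 hΦ) hΦ'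
  rw [mul_div_cancel_left₀ l hΦ'] at h
  refine h.congr' ?_
  filter_upwards [self_mem_nhdsWithin] with y hy
  simp only [slope_def_field, Function.comp_apply, hgx, Pi.div_apply]
  exact div_div_div_cancel_right₀ (sub_ne_zero.2 hy) _ _

lemma tendsto_sub_div_sub_of_semiconj {c l Φ' : ℝ} {e p Φ : ℝ → ℝ} (hc : 1 < c)
    (he : e.Injective) (hcont : ContinuousAt e 0) (hp : HasDerivAt p l (e 0))
    (hpe : ∀ t, p (e t) = e (c⁻¹ * t)) (hΦ : HasDerivAt Φ Φ' (e 0)) (hΦ' : Φ' ≠ 0) :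
    Tendsto (fun k => (Φ (e (c⁻¹ ^ (k + 1))) - Φ (e 0)) / (Φ (e (c⁻¹ ^ k)) - Φ (e 0))) atTop
      (𝓝 l) := by
  have hc0 : 0 < c⁻¹ := by positivity
  have hey : Tendsto (fun k => e (c⁻¹ ^ k)) atTop (𝓝[≠] (e 0)) :=
    tendsto_nhdsWithin_iff.2 ⟨hcont.tendsto.comp (tendsto_pow_atTop_nhds_zero_of_lt_one hc0.le
      (inv_lt_one_of_one_lt₀ hc)), Eventually.of_forall fun k => he.ne (pow_pos hc0 k).ne'⟩
  refine ((tendsto_sub_div_sub_of_hasDerivAt hΦ hΦ' hp (by rw [hpe, mul_zero])).comp hey).congr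
    fun k => ?_
  rw [Function.comp_apply, hpe, ← pow_succ']

lemma IsAlmostExpandingAtZero.eventually_antitoneOn {G e σ : ℝ → ℝ} {η : ℝ}
    (hG : IsAlmostExpandingAtZero G) (hη : η < 1) (he : StrictAnti e) (he0 : ∀ t, 0 < e t)
    (hlim : Tendsto e atTop (𝓝 0)) (hGe : ∀ t, G (e t) = e (σ t)) :
    ∀ᶠ N in atTop, AntitoneOn (fun s => negInvLog (e (σ s)) - η * negInvLog (e s)) (Ici N) := by
  obtain ⟨δ, hδ, hmono⟩ := hG η hη
  filter_upwards [hlim.eventually_lt_const hδ] with N hN s hs t ht hst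
  have hmem : ∀ r ∈ Ici N, e r ∈ Ioo 0 δ := fun r hr => ⟨he0 r, (he.antitone hr).trans_lt hN⟩
  simpa only [hGe] using hmono (hmem t ht) (hmem s hs) (he.antitone hst)

lemma exists_forall_geometric_mul_sub_le {c η : ℝ} {e A B : ℝ → ℝ} (hc : 2 ≤ c) (hη : 0 ≤ η)
    (hη1 : η < 1) (he : StrictAnti e) (he0 : ∀ t, 0 < e t) (hlim : Tendsto e atTop (𝓝 0))
    (hA : IsAlmostExpandingAtZero A) (hB : IsAlmostExpandingAtZero B)
    (hAe : ∀ t, A (e t) = e (c * t)) (hBe : ∀ t, B (e t) = e (t + 1)) :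
    ∃ N : ℕ, e N < 1 ∧ ∀ k : ℕ, (η * (1 + η)) ^ k *
      (negInvLog (e N) - negInvLog (e (N + c⁻¹ ^ k))) ≤ negInvLog (e N) := by
  obtain ⟨N, hNA, hNB, hN1⟩ := (tendsto_natCast_atTop_atTop.eventually
    ((hA.eventually_antitoneOn hη1 he he0 hlim hAe).and
      ((hB.eventually_antitoneOn hη1 he he0 hlim hBe).and
        (hlim.eventually_lt_const one_pos)))).exists
  have hmem : ∀ s ≥ (N : ℝ), e s ∈ Ioo (0 : ℝ) 1 := fun s hs =>
    ⟨he0 s, (he.antitone hs).trans_lt hN1⟩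
  have hW : AntitoneOn (fun s => negInvLog (e s)) (Ici N) := fun s hs t ht hst =>
    strictMonoOn_negInvLog.monotoneOn (hmem t ht) (hmem s hs) (he.antitone hst)
  have hc0 : 0 < c := by linarith
  refine ⟨N, hN1, fun k => ?_⟩
  have hck : (N : ℝ) ≤ c ^ k * N :=
    le_mul_of_one_le_left N.cast_nonneg (one_le_pow₀ (by linarith))
  have hck' : (N : ℝ) ≤ c ^ k * (N + 1) := hck.trans (by gcongr; linarith)
  calc _ ≤ negInvLog (e (c ^ k * N)) - negInvLog (e (c ^ k * (N + 1))) :=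
        pow_mul_sub_le_of_antitoneOn hc N.cast_nonneg hη hW hNA hNB k N le_rfl (c⁻¹ ^ k)
          (by positivity) (by simp [hc0.ne'])
    _ ≤ negInvLog (e N) := (sub_le_self _ (negInvLog_pos (hmem _ hck')).le).trans
        (hW self_mem_Ici hck hck)

theorem multiplier_lt_one_of_isAlmostExpandingAtZero {c l : ℝ} {e A B p : ℝ → ℝ} (hc : 2 ≤ c)
    (he : StrictAnti e) (he0 : ∀ t, 0 < e t) (hlim : Tendsto e atTop (𝓝 0))
    (hcont : ContinuousAt e 0) (hA : IsAlmostExpandingAtZero A) (hB : IsAlmostExpandingAtZero B)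
    (hAe : ∀ t, A (e t) = e (c * t)) (hBe : ∀ t, B (e t) = e (t + 1))
    (hp : HasDerivAt p l (e 0)) (hpe : ∀ t, p (e t) = e (c⁻¹ * t))
    (hshift : ∀ N : ℕ, ∃ G : ℝ → ℝ, ∃ d ≠ 0, HasDerivAt G d (e 0) ∧ ∀ t, G (e t) = e (t + N)) :
    l < 1 := by
  have hc0 : 0 < c⁻¹ := by positivity
  -- Any `η < 1` with `1 < η * (1 + η)` would do.
  obtain ⟨N, hN1, hbound⟩ := exists_forall_geometric_mul_sub_le (η := 9 / 10) hc (by norm_num)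
    (by norm_num) he he0 hlim hA hB hAe hBe
  have hN : e N ∈ Ioo (0 : ℝ) 1 := ⟨he0 N, hN1⟩
  have hpos : ∀ k : ℕ, 0 < negInvLog (e N) - negInvLog (e (N + c⁻¹ ^ k)) := fun k => by
    have hlt : e (N + c⁻¹ ^ k) < e N := he (lt_add_of_pos_right _ (pow_pos hc0 k))
    exact sub_pos.2 (strictMonoOn_negInvLog ⟨he0 _, hlt.trans hN1⟩ hN hlt)
  obtain ⟨G, d, hd, hG, hGe⟩ := hshift N
  have hG0 : G (e 0) = e N := by rw [hGe, zero_add]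
  have hΦ : HasDerivAt (negInvLog ∘ G) ((e N)⁻¹ / Real.log (e N) ^ 2 * d) (e 0) :=
    HasDerivAt.comp (e 0) (by rw [hG0]; exact hasDerivAt_negInvLog hN) hG
  have hΦ' : (e N)⁻¹ / Real.log (e N) ^ 2 * d ≠ 0 := mul_ne_zero (div_ne_zero
    (inv_ne_zero hN.1.ne') (pow_ne_zero 2 (Real.log_neg hN.1 hN.2).ne)) hd
  have hratio := tendsto_sub_div_sub_of_semiconj (by linarith) he.injective hcont hp hpe hΦ hΦ'
  simp only [Function.comp_apply, hGe, add_comm _ (N : ℝ), add_zero] at hratio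
  refine (le_inv_of_tendsto_ratio (by norm_num) hpos hbound (hratio.congr fun k => ?_)).trans_lt
    (by norm_num)
  rw [← neg_div_neg_eq, neg_sub, neg_sub]

/-! ### Linearization of a contraction on its basin -/

section Contraction

variable {X : Type*} [PseudoMetricSpace X] {κ : ℝ≥0} {p : X → X} {U : Set X} {x₀ : X}

lemma lipschitzOnWith_iterate (hp : LipschitzOnWith κ p U) (hU : MapsTo p U U) (n : ℕ) :
    LipschitzOnWith (κ ^ n) p^[n] U := by
  induction n with
  | zero => simpa using LipschitzWith.id.lipschitzOnWith
  | succ n ih =>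
    rw [Function.iterate_succ, pow_succ]
    exact ih.comp hp hU

lemma holderOnWith_tsum_iterate {E : Type*} [NormedAddCommGroup E] [CompleteSpace E] {C r : ℝ≥0}
    {L : X → E} (hκ : κ < 1) (hp : LipschitzOnWith κ p U) (hU : MapsTo p U U) (hx₀ : x₀ ∈ U)
    (hfix : p x₀ = x₀) (hr : 0 < r) (hL : HolderOnWith C r L U) (hL₀ : L x₀ = 0) :
    (∀ x ∈ U, Summable fun i => L (p^[i] x)) ∧
      HolderOnWith (C * (1 - κ ^ (r : ℝ))⁻¹) r (fun x => ∑' i, L (p^[i] x)) U := by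
  have hgeom : HasSum (fun i : ℕ => ((κ : ℝ) ^ (r : ℝ)) ^ i) ↑((1 - κ ^ (r : ℝ))⁻¹) := by
    exact_mod_cast NNReal.hasSum_geometric (NNReal.rpow_lt_one hκ (NNReal.coe_pos.2 hr))
  have hterm : ∀ x ∈ U, ∀ y ∈ U, ∀ i : ℕ, ‖L (p^[i] x) - L (p^[i] y)‖ ≤
      C * dist x y ^ (r : ℝ) * ((κ : ℝ) ^ (r : ℝ)) ^ i := by
    intro x hx y hy i
    have hdist : dist (p^[i] x) (p^[i] y) ≤ κ ^ i * dist x y := by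
      exact_mod_cast (lipschitzOnWith_iterate hp hU i).dist_le_mul x hx y hy
    calc ‖L (p^[i] x) - L (p^[i] y)‖ ≤ C * (κ ^ i * dist x y) ^ (r : ℝ) := by
          rw [← dist_eq_norm]
          exact hL.dist_le_of_le (hU.iterate i hx) (hU.iterate i hy) hdist
      _ = C * dist x y ^ (r : ℝ) * ((κ : ℝ) ^ (r : ℝ)) ^ i := by
          rw [Real.mul_rpow (by positivity) dist_nonneg, Real.rpow_pow_comm κ.coe_nonneg]
          ring
  have hsum : ∀ x ∈ U, Summable fun i => L (p^[i] x) := fun x hx =>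
    Summable.of_norm_bounded (hgeom.summable.mul_left (C * dist x x₀ ^ (r : ℝ))) fun i => by
      simpa only [Function.iterate_fixed hfix, hL₀, sub_zero] using hterm x hx x₀ hx₀ i
  refine ⟨hsum, holderOnWith_iff_dist_le.2 fun x hx y hy => ?_⟩
  rw [dist_eq_norm, ← (hsum x hx).tsum_sub (hsum y hy), NNReal.coe_mul, mul_right_comm]
  exact tsum_of_norm_bounded (hgeom.mul_left _) (hterm x hx y hy)

end Contraction

section Basin

variable {E : Type*} {p : E → E} {x₀ : E} {s : Set E}

lemma forall_mem_of_eventually_nhds_of_iterate [TopologicalSpace E] {P : E → Prop}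
    (hs : MapsTo p s s) (horbit : ∀ x ∈ s, Tendsto (fun k => p^[k] x) atTop (𝓝 x₀))
    (hP : ∀ᶠ x in 𝓝 x₀, P x) (hstep : ∀ x ∈ s, P (p x) → P x) : ∀ x ∈ s, P x := by
  have hpull : ∀ k : ℕ, ∀ x ∈ s, P (p^[k] x) → P x := by
    intro k
    induction k with
    | zero => exact fun _ _ h => h
    | succ k ih => exact fun x hx h => hstep x hx (ih (p x) (hs hx) h)
  intro x hx
  obtain ⟨k, hk⟩ := ((horbit x hx).eventually hP).exists
  exact hpull k x hx hk

variable [NormedAddCommGroup E] [NormedSpace ℝ E]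

lemma exists_subset_lipschitzOnWith_mapsTo {p' : E →L[ℝ] E} (hp : HasStrictFDerivAt p p' x₀)
    (hlt : ‖p'‖₊ < 1) (hfix : p x₀ = x₀) {W : Set E} (hW : W ∈ 𝓝 x₀) :
    ∃ κ < 1, ∃ U ∈ 𝓝 x₀, U ⊆ W ∧ LipschitzOnWith κ p U ∧ MapsTo p U U := by
  obtain ⟨κ, hpκ, hκ⟩ := exists_between hlt
  obtain ⟨V, hV, hVp⟩ := hp.exists_lipschitzOnWith_of_nnnorm_lt κ hpκ
  obtain ⟨δ, hδ, hball⟩ := Metric.mem_nhds_iff.1 (inter_mem hV hW)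
  have hlip : LipschitzOnWith κ p (Metric.ball x₀ δ) := hVp.mono fun x hx => (hball hx).1
  refine ⟨κ, hκ, Metric.ball x₀ δ, Metric.ball_mem_nhds x₀ hδ, fun x hx => (hball hx).2, hlip,
    fun x hx => Metric.mem_ball.2 ?_⟩
  calc dist (p x) x₀ = dist (p x) (p x₀) := by rw [hfix]
    _ ≤ κ * dist x x₀ := hlip.dist_le_mul x hx x₀ (Metric.mem_ball_self hδ)
    _ ≤ dist x x₀ := mul_le_of_le_one_left dist_nonneg (by exact_mod_cast hκ.le)
    _ < δ := hx

lemma exists_locallyHolderAt_eq_add_comp {F : Type*} [NormedAddCommGroup F] [NormedSpace ℝ F]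
    [CompleteSpace F] {r : ℝ≥0} {p' : E → E →L[ℝ] E} {L : E → F} (hs : IsOpen s) (hx₀ : x₀ ∈ s)
    (hfix : p x₀ = x₀) (hps : MapsTo p s s)
    (horbit : ∀ x ∈ s, Tendsto (fun k => p^[k] x) atTop (𝓝 x₀))
    (hp : ∀ x ∈ s, HasStrictFDerivAt p (p' x) x) (hlt : ‖p' x₀‖₊ < 1) (hr : 0 < r)
    (hL : ∀ x ∈ s, LocallyHolderAt r L x) (hL₀ : L x₀ = 0) :
    ∃ ψ : E → F, (∀ x ∈ s, LocallyHolderAt r ψ x) ∧ ∀ x ∈ s, ψ x = L x + ψ (p x) := by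
  obtain ⟨C, W, hW, hLW⟩ := hL x₀ hx₀
  obtain ⟨κ, hκ, U, hU, hUW, hlip, hmaps⟩ :=
    exists_subset_lipschitzOnWith_mapsTo (hp x₀ hx₀) hlt hfix hW
  obtain ⟨hsumU, hψU⟩ := holderOnWith_tsum_iterate hκ hlip hmaps (mem_of_mem_nhds hU) hfix hr
    (hLW.mono hUW) hL₀
  have hsum : ∀ x ∈ s, Summable fun i => L (p^[i] x) :=
    forall_mem_of_eventually_nhds_of_iterate hps horbit (eventually_of_mem hU hsumU)
      fun x _ h => (summable_nat_add_iff 1).1 h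
  have hψ : ∀ x ∈ s, ∑' i, L (p^[i] x) = L x + ∑' i, L (p^[i] (p x)) := fun x hx =>
    (hsum x hx).tsum_eq_zero_add
  refine ⟨fun x => ∑' i, L (p^[i] x), ?_, hψ⟩
  refine forall_mem_of_eventually_nhds_of_iterate hps horbit
    ((eventually_mem_nhds_iff.2 hU).mono fun y hy => ⟨_, U, hy, hψU⟩) fun x hx h => ?_
  have hcomp := h.comp (.of_hasStrictFDerivAt (hp x hx)) (hp x hx).continuousAt
  rw [mul_one] at hcomp
  exact ((hL x hx).add hcomp hr).congr (eventually_of_mem (hs.mem_nhds hx)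
    fun y hy => (hψ y hy).symm)

end Basin

lemma hasDerivAt_integral_of_mem_of_isOpen {q : ℝ → ℝ} {s : Set ℝ} {x₀ x : ℝ} (hs : IsOpen s)
    (hs' : s.OrdConnected) (hq : ContinuousOn q s) (hx₀ : x₀ ∈ s) (hx : x ∈ s) :
    HasDerivAt (fun y => ∫ t in x₀..y, q t) (q x) x :=
  intervalIntegral.integral_hasDerivAt_right
    (hq.mono (hs'.uIcc_subset hx₀ hx)).intervalIntegrable
    (hq.stronglyMeasurableAtFilter hs x hx) (hq.continuousAt (hs.mem_nhds hx))

theorem exists_linearization_of_deriv_lt_one {α : ℝ≥0} {p : ℝ → ℝ} {s : Set ℝ} {x₀ : ℝ}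
    (hα : 0 < α) (hs : IsOpen s) (hs' : s.OrdConnected) (hx₀ : x₀ ∈ s) (hfix : p x₀ = x₀)
    (hps : MapsTo p s s) (horbit : ∀ x ∈ s, Tendsto (fun k => p^[k] x) atTop (𝓝 x₀))
    (hp : ∀ x ∈ s, IsC1HolderDiffeoAt α p x) (hpos : ∀ x ∈ s, 0 < deriv p x)
    (hlt : deriv p x₀ < 1) :
    ∃ H : ℝ → ℝ, (∀ x ∈ s, IsC1HolderDiffeoAt α H x) ∧ (∀ x ∈ s, 0 < deriv H x) ∧ H x₀ = 0 ∧
      ∀ x ∈ s, H (p x) = deriv p x₀ * H x := by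
  set l := deriv p x₀
  have hl : 0 < l := hpos x₀ hx₀
  obtain ⟨ψ, hψ, hψp⟩ : ∃ ψ : ℝ → ℝ, (∀ x ∈ s, LocallyHolderAt α ψ x) ∧
      ∀ x ∈ s, ψ x = Real.log (deriv p x / l) + ψ (p x) := by
    refine exists_locallyHolderAt_eq_add_comp hs hx₀ hfix hps horbit
      (fun x hx => ((hp x hx).hasStrictDerivAt hα).hasStrictFDerivAt) ?_ hα (fun x hx => ?_)
      (by rw [div_self hl.ne', Real.log_one])
    · rw [ContinuousLinearMap.nnnorm_toSpanSingleton, ← NNReal.coe_lt_coe, coe_nnnorm,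
        Real.norm_of_nonneg hl.le]
      exact hlt
    · exact LocallyHolderAt.contDiffAt_comp (g := fun v => Real.log (v / l))
        ((contDiffAt_id.div_const l).log (div_pos (hpos x hx) hl).ne')
        (hp x hx).locallyHolderAt_deriv hα
  have hq : ∀ x ∈ s, LocallyHolderAt α (Real.exp ∘ ψ) x := fun x hx =>
    (hψ x hx).contDiffAt_comp Real.contDiff_exp.contDiffAt hα
  set H : ℝ → ℝ := fun x => ∫ t in x₀..x, Real.exp (ψ t)
  have hH : ∀ x ∈ s, HasDerivAt H (Real.exp (ψ x)) x := fun x hx =>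
    hasDerivAt_integral_of_mem_of_isOpen hs hs'
      (fun y hy => ((hq y hy).continuousAt hα).continuousWithinAt) hx₀ hx
  have hH₀ : H x₀ = 0 := intervalIntegral.integral_same
  have hcocycle : ∀ x ∈ s, Real.exp (ψ (p x)) * deriv p x = l * Real.exp (ψ x) := fun x hx => by
    rw [hψp x hx, Real.exp_add, Real.exp_log (div_pos (hpos x hx) hl)]
    field_simp
  have hdefect : ∀ x ∈ s, HasDerivAt (fun y => H (p y) - l * H y) 0 x := fun x hx => by
    have h := ((hH _ (hps hx)).comp x (hp x hx).hasDerivAt).sub ((hH x hx).const_mul l)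
    rwa [hcocycle x hx, sub_self] at h
  refine ⟨H, fun x hx => .of_hasDerivAt (eventually_of_mem (hs.mem_nhds hx) hH)
    (Real.exp_pos _).ne' (hq x hx), fun x hx => ?_, hH₀, fun x hx => ?_⟩
  · rw [(hH x hx).deriv]
    exact Real.exp_pos _
  · have hconst := hs.is_const_of_deriv_eq_zero hs'.isPreconnected
      (fun y hy => (hdefect y hy).differentiableAt.differentiableWithinAt)
      (fun y hy => (hdefect y hy).deriv) hx hx₀
    rw [hfix, hH₀, mul_zero, sub_zero] at hconst
    exact sub_eq_zero.1 hconst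

/-! ### Two incommensurable scaling laws -/

lemma eq_zero_of_forall_add_eq_add_of_isBounded {E : ℝ → ℝ} {b κ : ℝ}
    (hE : Bornology.IsBounded (range E)) (hb : ∀ s, E (s + b) = E s + κ) : κ = 0 := by
  have hiter : ∀ n : ℕ, E (n * b) - E 0 = n * κ := by
    intro n
    induction n with
    | zero => simp
    | succ n ih =>
      push_cast
      rw [add_one_mul, hb]
      linarith
  obtain ⟨C, hC⟩ := Metric.isBounded_iff.1 hE
  by_contra hκ
  obtain ⟨n, hn⟩ := exists_nat_gt (C / |κ|)
  have hle : |(n : ℝ) * κ| ≤ C := by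
    rw [← hiter, ← Real.dist_eq]
    exact hC (mem_range_self _) (mem_range_self _)
  rw [abs_mul, Nat.abs_cast] at hle
  exact hle.not_gt ((div_lt_iff₀ (abs_pos.2 hκ)).1 hn)

lemma eq_const_of_periodic_of_irrational {E : ℝ → ℝ} {a b : ℝ} (hE : Continuous E)
    (ha : E.Periodic a) (hb : E.Periodic b) (hirr : Irrational (b / a)) (s : ℝ) : E s = E 0 := by
  have hperiod : ∀ c ∈ AddSubgroup.closure {b, a}, E.Periodic c := fun c hc =>
    AddSubgroup.closure_induction (by rintro _ (rfl | rfl) <;> assumption)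
      (fun x => by rw [add_zero]) (fun _ _ _ _ => Function.Periodic.add_period)
      (fun _ _ => Function.Periodic.neg) hc
  exact congrFun (hE.ext_on (dense_addSubgroupClosure_pair_iff.2 hirr)
    (continuous_const (y := E 0)) fun c hc => (hperiod c hc).eq) s

lemma eq_add_mul_of_quasiperiodic {E : ℝ → ℝ} {a b A B : ℝ} (hE : Continuous E)
    (ha : ∀ s, E (s + a) = E s + A) (hb : ∀ s, E (s + b) = E s + B) (hirr : Irrational (b / a))
    (s : ℝ) : E s = E 0 + A / a * s := by
  have ha0 : a ≠ 0 := fun h => hirr.ne_zero (by rw [h, div_zero])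
  set F : ℝ → ℝ := fun s => E s - A / a * s
  have hF : Continuous F := hE.sub (continuous_const.mul continuous_id)
  have hFa : F.Periodic a := fun s => by
    simp only [F, ha]
    field_simp
    ring
  have hFb : ∀ s, F (s + b) = F s + (B - A / a * b) := fun s => by
    simp only [F, hb]
    ring
  have hκ := eq_zero_of_forall_add_eq_add_of_isBounded
    (hFa.isBounded_of_continuous ha0 hF) hFb
  have h := eq_const_of_periodic_of_irrational hF hFa (fun s => by rw [hFb, hκ, add_zero]) hirr s
  simp only [F, mul_zero, sub_zero] at h
  linarith

lemma log_eq_add_mul_log_of_homogeneous {h : ℝ → ℝ} {c μ l ν : ℝ} (hc : 0 < c) (hμ : 0 < μ)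
    (hirr : Irrational (Real.log μ / Real.log c)) (hcont : ContinuousOn h (Ioi 0))
    (h0 : ∀ t > 0, h t ≠ 0) (hch : ∀ t > 0, h (c * t) = l * h t)
    (hμh : ∀ t > 0, h (μ * t) = ν * h t) {t : ℝ} (ht : 0 < t) :
    Real.log (h t) = Real.log (h 1) + Real.log l / Real.log c * Real.log t := by
  have hshift : ∀ a k : ℝ, 0 < a → (∀ t > 0, h (a * t) = k * h t) → ∀ s,
      Real.log (h (Real.exp (s + Real.log a))) = Real.log (h (Real.exp s)) + Real.log k := by
    intro a k ha hak s
    have hk : k ≠ 0 := fun hk => h0 (a * 1) (by positivity) (by rw [hak 1 one_pos, hk, zero_mul])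
    rw [Real.exp_add, Real.exp_log ha, mul_comm, hak _ (Real.exp_pos s),
      Real.log_mul hk (h0 _ (Real.exp_pos s)), add_comm]
  have hE : Continuous fun s => Real.log (h (Real.exp s)) :=
    (hcont.comp_continuous Real.continuous_exp Real.exp_pos).log fun s => h0 _ (Real.exp_pos s)
  have h := eq_add_mul_of_quasiperiodic hE (hshift c l hc hch) (hshift μ ν hμ hμh) hirr
    (Real.log t)
  simpa only [Real.exp_log ht, Real.exp_zero] using h

lemma eq_of_tendsto_nhdsGT_zero_of_mul_invariant {X : Type*} [TopologicalSpace X] [T2Space X]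
    {R : ℝ → X} {r : ℝ} {ν : X} (hr : r ∈ Ioo (0 : ℝ) 1) (hR : ∀ t > 0, R (r * t) = R t)
    (hν : Tendsto R (𝓝[>] 0) (𝓝 ν)) {t : ℝ} (ht : 0 < t) : R t = ν := by
  have hiter : ∀ k : ℕ, R (r ^ k * t) = R t := by
    intro k
    induction k with
    | zero => rw [pow_zero, one_mul]
    | succ k ih => rw [pow_succ', mul_assoc, hR _ (mul_pos (pow_pos hr.1 k) ht), ih]
  have hlim : Tendsto (fun k : ℕ => r ^ k * t) atTop (𝓝[>] 0) := by
    refine tendsto_nhdsWithin_iff.2 ⟨?_, Eventually.of_forall fun k => mul_pos (pow_pos hr.1 k) ht⟩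
    simpa using (tendsto_pow_atTop_nhds_zero_of_lt_one hr.1.le hr.2).mul_const t
  exact tendsto_nhds_unique (tendsto_const_nhds.congr fun k => (hiter k).symm) (hν.comp hlim)

/-! ### Diffeomorphisms of the unit interval -/

lemma eqOn_derivWithin_of_hasDerivWithinAt {f f' : ℝ → ℝ} {s : Set ℝ} (hs : UniqueDiffOn ℝ s)
    (hf : ∀ x ∈ s, HasDerivWithinAt f (f' x) s x) : EqOn (derivWithin f s) f' s := fun x hx =>
  (hf x hx).derivWithin (hs x hx)

lemma asMap_coe (g : ↥unitI ≃ₜ ↥unitI) (x : unitI) : asMap g x = g x :=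
  dif_pos x.2

namespace IsOPC1HolderDiffeo

section

variable {α : ℝ} {g : ↥unitI ≃ₜ ↥unitI}

lemma asMap_zero (hg : IsOPC1HolderDiffeo α g) : asMap g 0 = 0 := by
  let zero : unitI := ⟨0, le_rfl, zero_le_one⟩
  refine le_antisymm ?_ ((asMap_coe g zero).symm ▸ (g zero).2.1)
  calc asMap g zero ≤ asMap g (g.symm zero) :=
        hg.1.monotoneOn zero.2 (g.symm zero).2 (g.symm zero).2.1
    _ = 0 := by rw [asMap_coe, g.apply_symm_apply]

lemma mapsTo_Ioo (hg : IsOPC1HolderDiffeo α g) : MapsTo (asMap g) (Ioo 0 1) (Ioo 0 1) := by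
  intro x hx
  let one : unitI := ⟨1, zero_le_one, le_rfl⟩
  have hxI : x ∈ unitI := Ioo_subset_Icc_self hx
  refine ⟨?_, (hg.1 hxI one.2 hx.2).trans_le ((asMap_coe g one).symm ▸ (g one).2.2)⟩
  rw [← hg.asMap_zero]
  exact hg.1 ⟨le_rfl, zero_le_one⟩ hxI hx.1

lemma hasDerivWithinAt (hg : IsOPC1HolderDiffeo α g) {x : ℝ} (hx : x ∈ unitI) :
    HasDerivWithinAt (asMap g) (derivWithin (asMap g) unitI x) unitI x := by
  obtain ⟨g', hg', -⟩ := hg.2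
  exact (hg' x hx).differentiableWithinAt.hasDerivWithinAt

lemma hasDerivAt (hg : IsOPC1HolderDiffeo α g) {x : ℝ} (hx : x ∈ Ioo (0 : ℝ) 1) :
    HasDerivAt (asMap g) (derivWithin (asMap g) unitI x) x :=
  (hg.hasDerivWithinAt (Ioo_subset_Icc_self hx)).hasDerivAt (Icc_mem_nhds hx.1 hx.2)

lemma derivWithin_pos (hg : IsOPC1HolderDiffeo α g) {x : ℝ} (hx : x ∈ unitI) :
    0 < derivWithin (asMap g) unitI x := by
  obtain ⟨hmono, g', hg', -, hne, -⟩ := hg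
  refine hmono.monotoneOn.derivWithin_nonneg.lt_of_ne' ?_
  rw [eqOn_derivWithin_of_hasDerivWithinAt (uniqueDiffOn_Icc one_pos) hg' hx]
  exact hne x hx

lemma continuousOn_derivWithin (hg : IsOPC1HolderDiffeo α g) :
    ContinuousOn (derivWithin (asMap g) unitI) unitI := by
  obtain ⟨-, g', hg', hcont, -⟩ := hg
  exact hcont.congr (eqOn_derivWithin_of_hasDerivWithinAt (uniqueDiffOn_Icc one_pos) hg')

lemma isAlmostExpandingAtZero (hg : IsOPC1HolderDiffeo α g) :
    IsAlmostExpandingAtZero (asMap g) := by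
  have h0 : (0 : ℝ) ∈ unitI := ⟨le_rfl, zero_le_one⟩
  have hIoo : ∀ᶠ x in 𝓝[>] (0 : ℝ), x ∈ Ioo (0 : ℝ) 1 := Ioo_mem_nhdsGT one_pos
  have hle : 𝓝[>] (0 : ℝ) ≤ 𝓝[unitI] 0 :=
    le_inf nhdsWithin_le_nhds (le_principal_iff.2 (hIoo.mono fun _ hx => ⟨hx.1.le, hx.2.le⟩))
  refine isAlmostExpandingAtZero_of_tendsto_deriv (hg.derivWithin_pos h0) ?_
    (hIoo.mono fun x hx => (hg.hasDerivAt hx).differentiableAt)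
    (((hg.continuousOn_derivWithin 0 h0).mono_left hle).congr' (hIoo.mono fun x hx =>
      (hg.hasDerivAt hx).deriv.symm))
  simpa only [hg.asMap_zero] using
    (hg.hasDerivWithinAt h0).continuousWithinAt.tendsto.mono_left hle

end

variable {α : ℝ≥0} {g : ↥unitI ≃ₜ ↥unitI} {x : ℝ}

lemma deriv_pos (hg : IsOPC1HolderDiffeo α g) (hx : x ∈ Ioo (0 : ℝ) 1) :
    0 < deriv (asMap g) x := by
  rw [(hg.hasDerivAt hx).deriv]
  exact hg.derivWithin_pos (Ioo_subset_Icc_self hx)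

lemma isC1HolderDiffeoAt (hg : IsOPC1HolderDiffeo α g) (hx : x ∈ Ioo (0 : ℝ) 1) :
    IsC1HolderDiffeoAt α (asMap g) x := by
  obtain ⟨-, g', hg', -, hne, C, hC, hholder⟩ := hg
  refine .of_hasDerivAt ?_ (hne x (Ioo_subset_Icc_self hx))
    ⟨⟨C, hC⟩, unitI, Icc_mem_nhds hx.1 hx.2, holderOnWith_iff_dist_le.2 hholder⟩
  filter_upwards [Ioo_mem_nhds hx.1 hx.2] with y hy
  exact (hg' y (Ioo_subset_Icc_self hy)).hasDerivAt (Icc_mem_nhds hy.1 hy.2)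

end IsOPC1HolderDiffeo

/-! ### Conjugated affine actions -/

/-- The parametrization `u` of `(0,1)` conjugates the self-map `σ` of `ℝ` to (the restriction of)
an orientation-preserving `C^{1+α}` diffeomorphism of `[0,1]`. -/
def IsRealizedBy (α : ℝ) (u σ : ℝ → ℝ) : Prop :=
  ∃ g : ↥unitI ≃ₜ ↥unitI, IsOPC1HolderDiffeo α g ∧ Function.Semiconj u σ (asMap g)

lemma IsRealizedBy.comp_neg {α : ℝ} {u σ τ : ℝ → ℝ} (h : IsRealizedBy α u σ)
    (hτ : ∀ t, -τ t = σ (-t)) : IsRealizedBy α (fun t => u (-t)) τ := by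
  obtain ⟨g, hg, hgu⟩ := h
  exact ⟨g, hg, fun t => by simp only [hτ, hgu (-t)]⟩

section

variable {α c l : ℝ} {u p : ℝ → ℝ}

lemma multiplier_lt_one_of_isRealizedBy_of_strictAnti (hc : 2 ≤ c) (hu : StrictAnti u)
    (hcont : Continuous u) (hrange : range u = Ioo 0 1) (hscale : IsRealizedBy α u (c * ·))
    (htrans : ∀ k : ℤ, IsRealizedBy α u (· + k)) (hp : HasDerivAt p l (u 0))
    (hpu : Function.Semiconj u (c⁻¹ * ·) p) : l < 1 := by
  have hmem : ∀ t, u t ∈ Ioo (0 : ℝ) 1 := fun t => hrange ▸ mem_range_self t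
  have hlim : Tendsto u atTop (𝓝 0) :=
    tendsto_atTop_isGLB hu.antitone (hrange ▸ isGLB_Ioo one_pos)
  obtain ⟨A, hA, hAu⟩ := hscale
  obtain ⟨B, hB, hBu⟩ := htrans 1
  refine multiplier_lt_one_of_isAlmostExpandingAtZero hc hu (fun t => (hmem t).1) hlim
    hcont.continuousAt hA.isAlmostExpandingAtZero hB.isAlmostExpandingAtZero (fun t => (hAu t).symm)
    (fun t => by simpa using (hBu t).symm) hp (fun t => (hpu t).symm) fun N => ?_
  obtain ⟨G, hG, hGu⟩ := htrans N
  exact ⟨asMap G, _, (hG.derivWithin_pos (Ioo_subset_Icc_self (hmem 0))).ne',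
    hG.hasDerivAt (hmem 0), fun t => by simpa using (hGu t).symm⟩

lemma multiplier_lt_one_of_isRealizedBy (hc : 2 ≤ c) (hu : u.Injective) (hcont : Continuous u)
    (hrange : range u = Ioo 0 1) (hscale : IsRealizedBy α u (c * ·))
    (htrans : ∀ k : ℤ, IsRealizedBy α u (· + k)) (hp : HasDerivAt p l (u 0))
    (hpu : Function.Semiconj u (c⁻¹ * ·) p) : l < 1 := by
  rcases hcont.strictMono_of_inj hu with hmono | hanti
  · refine multiplier_lt_one_of_isRealizedBy_of_strictAnti (u := fun t => u (-t)) hc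
      (fun _ _ hst => hmono (neg_lt_neg hst)) (hcont.comp continuous_neg)
      ((neg_surjective.range_comp u).trans hrange) (hscale.comp_neg fun t => by ring)
      (fun k => (htrans (-k)).comp_neg fun t => by push_cast; ring) (by rwa [neg_zero])
      fun t => ?_
    simp only [← mul_neg, hpu (-t)]
  · exact multiplier_lt_one_of_isRealizedBy_of_strictAnti hc hanti hcont hrange hscale htrans hp hpu

end

section

variable {α : ℝ≥0} {c l μ : ℝ} {u H : ℝ → ℝ}

lemma exists_linearization_of_isRealizedBy (hα : 0 < α) (hc : 2 ≤ c) (hu : u.Injective)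
    (hcont : Continuous u) (hrange : range u = Ioo 0 1) (hscale : IsRealizedBy α u (c * ·))
    (hscale' : IsRealizedBy α u (c⁻¹ * ·)) (htrans : ∀ k : ℤ, IsRealizedBy α u (· + k)) :
    ∃ H : ℝ → ℝ, ∃ l ∈ Ioo (0 : ℝ) 1, (∀ x ∈ Ioo 0 1, IsC1HolderDiffeoAt α H x) ∧
      StrictMonoOn H (Ioo 0 1) ∧ H (u 0) = 0 ∧ ∀ t, H (u (c⁻¹ * t)) = l * H (u t) := by
  obtain ⟨g, hg, hgu⟩ := hscale'
  have hmem : ∀ t, u t ∈ Ioo (0 : ℝ) 1 := fun t => hrange ▸ mem_range_self t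
  have hl : deriv (asMap g) (u 0) < 1 := multiplier_lt_one_of_isRealizedBy hc hu hcont hrange
    hscale htrans (hg.isC1HolderDiffeoAt (hmem 0)).hasDerivAt hgu
  have horbit : ∀ x ∈ Ioo (0 : ℝ) 1, Tendsto (fun k => (asMap g)^[k] x) atTop (𝓝 (u 0)) := by
    rw [← hrange]
    rintro _ ⟨t, rfl⟩
    have hlim : Tendsto (fun k : ℕ => (c⁻¹) ^ k * t) atTop (𝓝 0) := by
      simpa using (tendsto_pow_atTop_nhds_zero_of_lt_one (by positivity)
        (inv_lt_one_of_one_lt₀ (by linarith : 1 < c))).mul_const t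
    refine ((hcont.tendsto 0).comp hlim).congr fun k => ?_
    rw [← (hgu.iterate_right k) t, mul_left_iterate, Function.comp_apply]
  obtain ⟨H, hH, hHpos, hH0, hHg⟩ := exists_linearization_of_deriv_lt_one hα isOpen_Ioo
    ordConnected_Ioo (hmem 0) (by simp only [← hgu 0, mul_zero]) hg.mapsTo_Ioo horbit
    (fun x hx => hg.isC1HolderDiffeoAt hx) (fun x hx => hg.deriv_pos hx) hl
  refine ⟨H, _, ⟨hg.deriv_pos (hmem 0), hl⟩, hH, ?_, hH0, fun t => ?_⟩
  · exact strictMonoOn_of_deriv_pos (convex_Ioo 0 1)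
      (fun x hx => (hH x hx).continuousAt.continuousWithinAt)
      fun x hx => hHpos x (interior_subset hx)
  · rw [hgu t, hHg _ (hmem t)]

lemma exists_comp_mul_eq_of_linearization (hc : 1 < c) (hu : u.Injective) (hcont : Continuous u)
    (hrange : range u = Ioo 0 1) (hscale : IsRealizedBy α u (μ * ·)) (hl : l ≠ 0)
    (hH : ∀ x ∈ Ioo 0 1, IsC1HolderDiffeoAt α H x) (hH0 : H (u 0) = 0)
    (hHu : ∀ t > 0, H (u t) ≠ 0) (hHc : ∀ t, H (u (c⁻¹ * t)) = l * H (u t)) :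
    ∃ ν, ∀ t > 0, H (u (μ * t)) = ν * H (u t) := by
  have hmem : ∀ t, u t ∈ Ioo (0 : ℝ) 1 := fun t => hrange ▸ mem_range_self t
  obtain ⟨g, hg, hgu⟩ := hscale
  have hlim := tendsto_sub_div_sub_of_hasDerivAt (hH _ (hmem 0)).hasDerivAt
    (hH _ (hmem 0)).deriv_ne_zero (hg.hasDerivAt (hmem 0)) (by simp only [← hgu 0, mul_zero])
  have hu0 : Tendsto u (𝓝[>] 0) (𝓝[≠] (u 0)) := tendsto_nhdsWithin_iff.2
    ⟨(hcont.tendsto 0).mono_left nhdsWithin_le_nhds,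
      eventually_mem_nhdsWithin.mono fun t ht => hu.ne (ne_of_gt ht)⟩
  have hR : Tendsto (fun t => H (u (μ * t)) / H (u t)) (𝓝[>] 0)
      (𝓝 (derivWithin (asMap g) unitI (u 0))) := by
    refine (hlim.comp hu0).congr fun t => ?_
    rw [Function.comp_apply, ← hgu t, hH0, sub_zero, sub_zero]
  refine ⟨_, fun t ht => (div_eq_iff (hHu t ht)).1
    (eq_of_tendsto_nhdsGT_zero_of_mul_invariant (r := c⁻¹)
      ⟨by positivity, inv_lt_one_of_one_lt₀ hc⟩ (fun t _ => ?_) hR ht)⟩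
  rw [mul_left_comm, hHc, hHc, mul_div_mul_left _ _ hl]

lemma exists_isC1HolderDiffeoAt_log_eq (hα : 0 < α) (hc : 2 ≤ c) (hμ : 0 < μ)
    (hirr : Irrational (Real.log μ / Real.log c)) (hu : u.Injective) (hcont : Continuous u)
    (hrange : range u = Ioo 0 1) (hscale : IsRealizedBy α u (c * ·))
    (hscale' : IsRealizedBy α u (c⁻¹ * ·)) (hscaleμ : IsRealizedBy α u (μ * ·))
    (htrans : ∀ k : ℤ, IsRealizedBy α u (· + k)) :
    ∃ H : ℝ → ℝ, ∃ K : ℝ, ∃ θ ≠ 0, (∀ x ∈ Ioo 0 1, IsC1HolderDiffeoAt α H x) ∧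
      ∀ t > 0, H (u t) ≠ 0 ∧ Real.log (H (u t)) = K + θ * Real.log t := by
  obtain ⟨H, l, hl, hH, hmono, hH0, hHc⟩ :=
    exists_linearization_of_isRealizedBy hα hc hu hcont hrange hscale hscale' htrans
  have hmem : ∀ t, u t ∈ Ioo (0 : ℝ) 1 := fun t => hrange ▸ mem_range_self t
  have hHu : ∀ t > 0, H (u t) ≠ 0 := fun t ht => by
    rw [← hH0]
    exact hmono.injOn.ne (hmem t) (hmem 0) (hu.ne ht.ne')
  obtain ⟨ν, hν⟩ :=
    exists_comp_mul_eq_of_linearization (by linarith) hu hcont hrange hscaleμ hl.1.ne' hH hH0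
      hHu hHc
  have hHcont : Continuous (H ∘ u) := ContinuousOn.comp_continuous
    (fun x hx => (hH x hx).continuousAt.continuousWithinAt) hcont hmem
  have hHcinv : ∀ t > 0, H (u (c * t)) = l⁻¹ * H (u t) := fun t _ => by
    rw [eq_inv_mul_iff_mul_eq₀ hl.1.ne', ← hHc, inv_mul_cancel_left₀ (by linarith)]
  refine ⟨H, _, _, ?_, hH, fun t ht => ⟨hHu t ht, log_eq_add_mul_log_of_homogeneous (h := H ∘ u)
    (by linarith) hμ hirr hHcont.continuousOn hHu hHcinv hν ht⟩⟩
  rw [Real.log_inv]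
  exact div_ne_zero (neg_ne_zero.2 (Real.log_neg hl.1 hl.2).ne) (Real.log_pos (by linarith)).ne'

lemma isC1HolderDiffeoAt_of_log_comp_eq {f : ℝ → ℝ} {x K θ : ℝ} (hα : 0 < α) (hα' : α ≤ 1)
    (hH : IsC1HolderDiffeoAt α H x) (hHx : H x ≠ 0) (hθ : θ ≠ 0)
    (hf : ∀ᶠ y in 𝓝 x, 0 < f y ∧ Real.log (H y) = K + θ * Real.log (f y)) :
    IsC1HolderDiffeoAt α f x := by
  have hderiv : HasDerivAt (fun v => Real.exp ((Real.log v - K) / θ))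
      (Real.exp ((Real.log (H x) - K) / θ) * ((H x)⁻¹ / θ)) (H x) :=
    (((Real.hasDerivAt_log hHx).sub_const K).div_const θ).exp
  have hg : IsC1HolderDiffeoAt α (fun v => Real.exp ((Real.log v - K) / θ)) (H x) := by
    refine .of_contDiffAt hα' (((contDiffAt_id.log hHx).sub contDiffAt_const).div_const θ).exp ?_
    rw [hderiv.deriv]
    positivity
  refine (hg.comp hH hα).congr (hf.mono fun y hy => ?_)
  rw [Function.comp_apply, hy.2, add_sub_cancel_left, mul_div_cancel_left₀ _ hθ, Real.exp_log hy.1]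

theorem isC1HolderDiffeoAt_of_isRealizedBy {f : ℝ → ℝ} {x : ℝ} (hα : 0 < α) (hα' : α ≤ 1)
    (hc : 2 ≤ c) (hμ : 0 < μ) (hirr : Irrational (Real.log μ / Real.log c))
    (hfcont : ContinuousOn f (Ioo 0 1)) (hcont : Continuous u) (hrange : range u = Ioo 0 1)
    (hfu : Function.LeftInverse f u) (hscale : IsRealizedBy α u (c * ·))
    (hscale' : IsRealizedBy α u (c⁻¹ * ·)) (hscaleμ : IsRealizedBy α u (μ * ·))
    (htrans : ∀ k : ℤ, IsRealizedBy α u (· + k)) (hx : x ∈ Ioo (0 : ℝ) 1) :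
    IsC1HolderDiffeoAt α f x := by
  obtain ⟨H, K, θ, hθ, hH, hlog⟩ := exists_isC1HolderDiffeoAt_log_eq hα hc hμ hirr
    hfu.injective hcont hrange hscale hscale' hscaleμ htrans
  have huf : ∀ y ∈ Ioo (0 : ℝ) 1, u (f y) = y := by
    rw [← hrange]
    rintro _ ⟨t, rfl⟩
    rw [hfu]
  have hpos : ∀ y ∈ Ioo (0 : ℝ) 1, 0 < f y → IsC1HolderDiffeoAt α f y := fun y hy hfy => by
    have hlogf : ∀ z ∈ Ioo (0 : ℝ) 1, 0 < f z →
        H z ≠ 0 ∧ Real.log (H z) = K + θ * Real.log (f z) := fun z hz hfz => by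
      simpa only [huf z hz] using hlog (f z) hfz
    refine isC1HolderDiffeoAt_of_log_comp_eq (K := K) hα hα' (hH y hy) (hlogf y hy hfy).1 hθ ?_
    have hIoo := Ioo_mem_nhds hy.1 hy.2
    filter_upwards [hIoo, (hfcont.continuousAt hIoo).eventually_const_lt hfy] with z hz hfz
    exact ⟨hfz, (hlogf z hz hfz).2⟩
  obtain ⟨N, hN⟩ := exists_nat_gt (-f x)
  obtain ⟨g, hg, hgu⟩ := htrans N
  have hgf : ∀ y ∈ Ioo (0 : ℝ) 1, asMap g y = u (f y + N) := fun y hy => by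
    simpa only [huf y hy, Int.cast_natCast] using (hgu (f y)).symm
  have htransl : IsC1HolderDiffeoAt α (fun v => v - (N : ℝ)) (f (asMap g x)) :=
    .of_contDiffAt hα' (contDiffAt_id.sub contDiffAt_const) (by simp)
  refine ((htransl.comp (hpos _ ?_ ?_) hα).comp (hg.isC1HolderDiffeoAt hx) hα).congr ?_
  · rw [hgf x hx, ← hrange]
    exact mem_range_self _
  · rw [hgf x hx, hfu]
    linarith
  · filter_upwards [Ioo_mem_nhds hx.1 hx.2] with y hy
    rw [Function.comp_apply, Function.comp_apply, hgf y hy, hfu, add_sub_cancel_right]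

end

lemma homothety_zpow {a : ℝ} (ha : a ≠ 0) (k : ℤ) :
    homothety a ha ^ k = homothety (a ^ k) (zpow_ne_zero k ha) := by
  let toHomeo : ℝˣ →* (ℝ ≃ₜ ℝ) := MonoidHom.mk' (fun b => homothety b b.ne_zero)
    fun b c => Homeomorph.ext (mul_assoc (b : ℝ) c)
  refine (map_zpow toHomeo (Units.mk0 a ha) k).symm.trans (Homeomorph.ext fun x => ?_)
  exact congrArg (· * x) (Units.val_zpow_eq_zpow_val (Units.mk0 a ha) k)

lemma translation_zpow (a : ℝ) (k : ℤ) : translation a ^ k = translation (k * a) := by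
  let toHomeo : Multiplicative ℝ →* (ℝ ≃ₜ ℝ) := MonoidHom.mk' (fun b => translation b.toAdd)
    fun b c => Homeomorph.ext fun x => (add_left_comm x b.toAdd c.toAdd).trans (add_comm _ _)
  rw [← zsmul_eq_mul]
  exact (map_zpow toHomeo (Multiplicative.ofAdd a) k).symm

lemma exists_lt_zpow_of_ne_one {K : Type*} [Field K] [LinearOrder K] [IsStrictOrderedRing K]
    [Archimedean K] {a : K} (ha : 0 < a) (ha1 : a ≠ 1) (b : K) : ∃ k : ℤ, b < a ^ k := by
  rcases ha1.lt_or_gt with hlt | hgt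
  · obtain ⟨n, hn⟩ := pow_unbounded_of_one_lt b ((one_lt_inv₀ ha).2 hlt)
    exact ⟨-n, by rwa [zpow_neg, zpow_natCast, ← inv_pow]⟩
  · obtain ⟨n, hn⟩ := pow_unbounded_of_one_lt b hgt
    exact ⟨n, by rwa [zpow_natCast]⟩

lemma isRealizedBy_of_conj {α : ℝ} {f u σ : ℝ → ℝ} (hu : MapsTo u univ (Ioo 0 1))
    (huf : InvOn u f (Ioo 0 1) univ)
    (h : ∃ g : ↥unitI ≃ₜ ↥unitI, IsOPC1HolderDiffeo α g ∧
      ∀ x ∈ Ioo (0 : ℝ) 1, f (asMap g x) = σ (f x)) : IsRealizedBy α u σ := by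
  obtain ⟨g, hg, hgf⟩ := h
  refine ⟨g, hg, fun t => ?_⟩
  have hut : u t ∈ Ioo (0 : ℝ) 1 := hu (mem_univ t)
  rw [← huf.1 (hg.mapsTo_Ioo hut), hgf _ hut, huf.2 (mem_univ t)]

theorem conjugacy_is_C1Holder_general {α c μ : ℝ} (hα : α ∈ Ioc (0 : ℝ) 1) (hc : 0 < c)
    (hμ : 0 < μ) (hirr : Irrational (Real.log μ / Real.log c)) {f finv : ℝ → ℝ}
    (hfcont : ContinuousOn f (Ioo 0 1)) (hfinvcont : Continuous finv)
    (hfinvmaps : MapsTo finv univ (Ioo 0 1)) (hfinv : InvOn finv f (Ioo 0 1) univ)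
    (hconj : ∀ γ ∈ Subgroup.closure {homothety c hc.ne', translation 1, homothety μ hμ.ne'},
      ∃ g : ↥unitI ≃ₜ ↥unitI, IsOPC1HolderDiffeo α g ∧
        ∀ x ∈ Ioo (0 : ℝ) 1, f (asMap g x) = γ (f x)) :
    ∃ f' : ℝ → ℝ,
      (∀ x ∈ Ioo (0 : ℝ) 1, HasDerivWithinAt f (f' x) (Ioo 0 1) x) ∧
      (∀ x ∈ Ioo (0 : ℝ) 1, f' x ≠ 0) ∧
      ContinuousOn f' (Ioo 0 1) ∧
      ∀ x ∈ Ioo (0 : ℝ) 1, ∃ ε > (0 : ℝ), ∃ C : ℝ,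
        ∀ y ∈ Ioo (0 : ℝ) 1, ∀ z ∈ Ioo (0 : ℝ) 1,
          |y - x| < ε → |z - x| < ε → |f' y - f' z| ≤ C * |y - z| ^ α := by
  lift α to ℝ≥0 using hα.1.le
  have hrealized : ∀ γ ∈ Subgroup.closure {homothety c hc.ne', translation 1, homothety μ hμ.ne'},
      IsRealizedBy α finv γ := fun γ hγ => isRealizedBy_of_conj hfinvmaps hfinv (hconj γ hγ)
  have hscale : ∀ k : ℤ, IsRealizedBy α finv (c ^ k * ·) := fun k => by
    have h := hrealized _ (zpow_mem (Subgroup.subset_closure (mem_insert _ _)) k)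
    rwa [homothety_zpow] at h
  have htrans : ∀ k : ℤ, IsRealizedBy α finv (· + k) := fun k => by
    have h := hrealized _ (zpow_mem (Subgroup.subset_closure (.inr (mem_insert _ _))) k)
    rwa [translation_zpow, mul_one] at h
  have hscaleμ : IsRealizedBy α finv (μ * ·) :=
    hrealized _ (Subgroup.subset_closure (.inr (.inr rfl)))
  have hrange : range finv = Ioo 0 1 := by
    rw [← image_univ]
    exact (hfinv.symm.bijOn hfinvmaps (mapsTo_univ _ _)).image_eq
  obtain ⟨k, hk⟩ := exists_lt_zpow_of_ne_one hc
    (fun h => hirr.ne_zero (by rw [h, Real.log_one, div_zero])) 2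
  have hirrk : Irrational (Real.log μ / Real.log (c ^ k)) := by
    have hk0 : k ≠ 0 := fun h => by norm_num [h] at hk
    rw [Real.log_zpow, mul_comm, ← div_div]
    exact hirr.div_intCast hk0
  exact IsC1HolderDiffeoAt.exists_hasDerivWithinAt hα.1 fun x hx =>
    isC1HolderDiffeoAt_of_isRealizedBy hα.1 hα.2 hk.le hμ hirrk hfcont hfinvcont hrange
      (fun t => hfinv.2 (mem_univ t)) (hscale k) (by simpa only [zpow_neg] using hscale (-k))
      hscaleμ htrans hx

/-- Regularity of conjugacies: a topological conjugacy between a `C^{1+α}` action of the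
affine group `Γ_A` on `[0,1]` and the standard affine action on `ℝ` is itself of class
`C^{1+α}` on `(0,1)`. -/
theorem conjugacy_is_C1Holder
    (n : ℕ) (hn : 2 ≤ n) (α : ℝ) (hα : α ∈ Set.Ioc (0 : ℝ) 1)
    (μ : ℝ) (hμ : 0 < μ) (hirr : Irrational (Real.log μ / Real.log n))
    (φ : ↥(GammaA n hn μ hμ.ne') →* (↥unitI ≃ₜ ↥unitI))
    (hφreg : ∀ γ : ↥(GammaA n hn μ hμ.ne'), IsOPC1HolderDiffeo α (φ γ))
    (f finv : ℝ → ℝ)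
    (hfcont : ContinuousOn f (Set.Ioo 0 1))
    (hfbij : Set.BijOn f (Set.Ioo 0 1) Set.univ)
    (hfinvcont : Continuous finv)
    (hfinvmaps : Set.MapsTo finv Set.univ (Set.Ioo 0 1))
    (hfinv : Set.InvOn finv f (Set.Ioo 0 1) Set.univ)
    (hconj : ∀ (γ : ℝ ≃ₜ ℝ) (hγ : γ ∈ GammaA n hn μ hμ.ne'),
      ∀ x ∈ Set.Ioo (0 : ℝ) 1, f (asMap (φ ⟨γ, hγ⟩) x) = γ (f x)) :
    ∃ f' : ℝ → ℝ,
      (∀ x ∈ Set.Ioo (0 : ℝ) 1, HasDerivWithinAt f (f' x) (Set.Ioo 0 1) x) ∧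
      (∀ x ∈ Set.Ioo (0 : ℝ) 1, f' x ≠ 0) ∧
      ContinuousOn f' (Set.Ioo 0 1) ∧
      ∀ x ∈ Set.Ioo (0 : ℝ) 1, ∃ ε > (0 : ℝ), ∃ C : ℝ,
        ∀ y ∈ Set.Ioo (0 : ℝ) 1, ∀ z ∈ Set.Ioo (0 : ℝ) 1,
          |y - x| < ε → |z - x| < ε → |f' y - f' z| ≤ C * |y - z| ^ α :=
  conjugacy_is_C1Holder_general hα (by positivity) hμ hirr hfcont hfinvcont hfinvmaps hfinv
    fun γ hγ => ⟨φ ⟨γ, hγ⟩, hφreg _, hconj γ hγ⟩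
end
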